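/- Every quasidisk satisfies the (A)-condition: if f is a quasiconformal mapping of ℂ onto itself and D = f(𝔻) is the image of the unit disc, then there exist Θ_0, ρ_0 ∈ (0,1) such that m(D ∩ B(ζ, ρ)) ≤ Θ_0·m(B(ζ, ρ)) for all ζ ∈ ∂D and all ρ ≤ ρ_0. -/

import Mathlib

open Complex Metric MeasureTheory Filter Topology Set
open scoped ENNReal NNReal

noncomputable section

/-- The supremum of products of mutual distances of `n`-tuples of points of `E`
(the quantity `V_n` in the definition of the transfinite diameter). -/
noncomputable def diamProd (E : Set ℂ) (n : ℕ) : ℝ≥0∞ :=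
  ⨆ (z : Fin n → ℂ) (_ : ∀ i, z i ∈ E),
    ∏ p ∈ Finset.univ.filter (fun p : Fin n × Fin n => p.1 < p.2), edist (z p.1) (z p.2)

/-- The logarithmic capacity of a (bounded) set, defined as its transfinite diameter
`lim_n V_n^{2/(n(n-1))}` (realized via `limsup`). -/
noncomputable def logCap (E : Set ℂ) : ℝ≥0∞ :=
  Filter.limsup (fun n : ℕ => diamProd E n ^ ((2 : ℝ) / ((n : ℝ) * ((n : ℝ) - 1))))
    Filter.atTop

/-- A set is measurable with respect to logarithmic capacity if its inner capacity
(sup of capacities of compact subsets) equals its outer capacity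
(inf of capacities of open supersets). -/
def CapMeasurableSet (E : Set ℂ) : Prop :=
  (⨆ (F : Set ℂ) (_ : IsCompact F) (_ : F ⊆ E), logCap F) =
    (⨅ (U : Set ℂ) (_ : IsOpen U) (_ : E ⊆ U), logCap U)

/-- A function defined on `E ⊆ ℂ` is measurable with respect to logarithmic capacity if
preimages of open sets are measurable with respect to logarithmic capacity. -/
def CapMeasFunOn {X : Type*} [TopologicalSpace X] (E : Set ℂ) (f : ℂ → X) : Prop :=
  ∀ O : Set X, IsOpen O → CapMeasurableSet {z | z ∈ E ∧ f z ∈ O}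

/-- `P` holds quasi-everywhere on `E`: the exceptional set has logarithmic capacity zero. -/
def QEOn (E : Set ℂ) (P : ℂ → Prop) : Prop :=
  logCap {z | z ∈ E ∧ ¬ P z} = 0

/-- The unit circle `∂𝔻`. -/
def unitCircle : Set ℂ := Metric.sphere 0 1

/-- Variation of `f` along the parametrized arc `p` over parameters in `I`. -/
noncomputable def varAlong {E : Type*} [SeminormedAddCommGroup E]
    (f : ℂ → E) (p : ℝ → ℂ) (I : Set ℝ) : ℝ≥0∞ :=
  ⨆ (k : ℕ) (t : Fin (k + 1) → ℝ) (_ : Monotone t) (_ : ∀ i, t i ∈ I),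
    ∑ i : Fin k, (‖f (p (t i.succ)) - f (p (t i.castSucc))‖₊ : ℝ≥0∞)

/-- Cyclic variation of `f` on the unit circle: the supremum of
`∑ⱼ ‖f(ζ_{j+1}) - f(ζ_j)‖` over all finite collections of points of `∂𝔻` in cyclic order
(realized by monotone angle parameters running over at most one full turn). -/
noncomputable def circleVar {E : Type*} [SeminormedAddCommGroup E] (f : ℂ → E) : ℝ≥0∞ :=
  ⨆ (k : ℕ) (t : Fin (k + 1) → ℝ) (_ : Monotone t)
    (_ : t (Fin.last k) ≤ t 0 + 2 * Real.pi),
    ∑ i : Fin k, (‖f (circleMap 0 1 (t i.succ)) - f (circleMap 0 1 (t i.castSucc))‖₊ : ℝ≥0∞)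

/-- `A` is a subarc of the curve `Γ` on which `f` has bounded variation. -/
def IsBVArcOn {E : Type*} [SeminormedAddCommGroup E] (f : ℂ → E) (Γ A : Set ℂ) : Prop :=
  A ⊆ Γ ∧ ∃ (p : ℝ → ℂ) (I : Set ℝ), I.OrdConnected ∧ ContinuousOn p I ∧
    Set.InjOn p I ∧ p '' I = A ∧ varAlong f p I < ⊤

/-- `f` is of countable bounded variation on the curve `Γ`: there are countably many
mutually disjoint arcs of `Γ` on each of which `f` has bounded variation, whose complement
in `Γ` has logarithmic capacity zero. -/
def CBVOn {E : Type*} [SeminormedAddCommGroup E] (f : ℂ → E) (Γ : Set ℂ) : Prop :=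
  ∃ γ : ℕ → Set ℂ, (Pairwise fun m n => Disjoint (γ m) (γ n)) ∧
    (∀ n, IsBVArcOn f Γ (γ n)) ∧ logCap (Γ \ ⋃ n, γ n) = 0

/-- The open sector (angle) with vertex `ζ`, direction `e` and half-opening `a`. -/
def Sector (ζ e : ℂ) (a : ℝ) : Set ℂ :=
  {z | z ≠ ζ ∧ |Complex.arg ((z - ζ) / e)| < a}

/-- `f` has angular (nontangential) limit `L` at the boundary point `ζ` of `D`:
along every angle with vertex `ζ` lying in `D` near `ζ`, `f` tends to `L`. -/
def AngularLimit {X : Type*} [TopologicalSpace X] (f : ℂ → X) (D : Set ℂ) (ζ : ℂ)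
    (L : X) : Prop :=
  ∀ (e : ℂ) (a r : ℝ), e ≠ 0 → 0 < a → a < Real.pi / 2 → 0 < r →
    Sector ζ e a ∩ Metric.ball ζ r ⊆ D →
    Filter.Tendsto f (𝓝[Sector ζ e a ∩ Metric.ball ζ r] ζ) (𝓝 L)

/-- `u` is harmonic on `D`. -/
def IsHarmonicOn (u : ℂ → ℝ) (D : Set ℂ) : Prop :=
  ContDiffOn ℝ 2 u D ∧ ∀ z ∈ D,
    fderiv ℝ (fun w => fderiv ℝ u w 1) z 1
      + fderiv ℝ (fun w => fderiv ℝ u w Complex.I) z Complex.I = 0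

/-- The curve `Γ` has tangent line at `ζ` in the direction `e`. -/
def HasTangentVia (Γ : Set ℂ) (ζ e : ℂ) : Prop :=
  e ≠ 0 ∧ Filter.Tendsto
    (fun z => Metric.infDist z {w : ℂ | ∃ t : ℝ, w = ζ + t • e} / ‖z - ζ‖)
    (𝓝[Γ \ {ζ}] ζ) (𝓝 0)

/-- The curve `Γ` has a tangent at `ζ`. -/
def HasTangentAt (Γ : Set ℂ) (ζ : ℂ) : Prop := ∃ e : ℂ, HasTangentVia Γ ζ e

/-- `D` is a Jordan domain: a bounded domain whose boundary is a Jordan curve. -/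
def IsJordanDomain (D : Set ℂ) : Prop :=
  IsOpen D ∧ IsConnected D ∧ Bornology.IsBounded D ∧
    Nonempty ((Metric.sphere (0 : ℂ) 1) ≃ₜ (frontier D))

/-- The quasihyperbolic distance in `D`: the infimum of `∫ ds / d(ζ, ∂D)` over
(rectifiable, here Lipschitz-parametrized) curves joining `z` and `w` in `D`. -/
noncomputable def qhDist (D : Set ℂ) (z w : ℂ) : ℝ :=
  sInf {L : ℝ | ∃ γ : ℝ → ℂ, (∃ K : ℝ≥0, LipschitzOnWith K γ (Set.Icc 0 1)) ∧
    (∀ t ∈ Set.Icc (0 : ℝ) 1, γ t ∈ D) ∧ γ 0 = z ∧ γ 1 = w ∧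
    L = ∫ t in (0 : ℝ)..1, ‖deriv γ t‖ / Metric.infDist (γ t) (frontier D)}

/-- `D` satisfies the quasihyperbolic boundary condition. -/
def QHBC (D : Set ℂ) : Prop :=
  ∃ (a b : ℝ) (z₀ : ℂ), z₀ ∈ D ∧ ∀ z ∈ D,
    qhDist D z z₀ ≤
      a * Real.log (Metric.infDist z₀ (frontier D) / Metric.infDist z (frontier D)) + b

/-- `D` satisfies the (A)-condition of Ladyzhenskaya–Ural'tseva. -/
def ACondition (D : Set ℂ) : Prop :=
  ∃ Θ₀ ∈ Set.Ioo (0 : ℝ) 1, ∃ ρ₀ ∈ Set.Ioo (0 : ℝ) 1,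
    ∀ ζ ∈ frontier D, ∀ ρ : ℝ, 0 < ρ → ρ ≤ ρ₀ →
      volume (D ∩ Metric.ball ζ ρ) ≤ ENNReal.ofReal Θ₀ * volume (Metric.ball ζ ρ)

/-- `g₁, g₂` are the first generalized (weak) partial derivatives of `f` on `D`. -/
def HasWeakPartialsOn (f g₁ g₂ : ℂ → ℂ) (D : Set ℂ) : Prop :=
  MeasureTheory.LocallyIntegrableOn f D volume ∧
  MeasureTheory.LocallyIntegrableOn g₁ D volume ∧
  MeasureTheory.LocallyIntegrableOn g₂ D volume ∧
  ∀ φ : ℂ → ℝ, ContDiff ℝ (⊤ : ℕ∞) φ → HasCompactSupport φ → tsupport φ ⊆ D →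
    (∫ z in D, f z * (fderiv ℝ φ z 1 : ℂ)) = -(∫ z in D, g₁ z * (φ z : ℂ)) ∧
    (∫ z in D, f z * (fderiv ℝ φ z Complex.I : ℂ)) = -(∫ z in D, g₂ z * (φ z : ℂ))

/-- `f` is a regular solution of the Beltrami equation `f_z̄ = μ f_z` on `D`:
continuous, discrete, open, with first generalized derivatives satisfying the
equation almost everywhere. -/
def IsRegularBeltramiSolution (μ : ℂ → ℂ) (f : ℂ → ℂ) (D : Set ℂ) : Prop :=
  ContinuousOn f D ∧
  (∀ w : ℂ, ∀ z ∈ D, f z = w → 𝓝[(D ∩ f ⁻¹' {w}) \ {z}] z = ⊥) ∧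
  (∀ U : Set ℂ, U ⊆ D → IsOpen U → IsOpen (f '' U)) ∧
  ∃ g₁ g₂ : ℂ → ℂ, HasWeakPartialsOn f g₁ g₂ D ∧
    ∀ᵐ z ∂(volume.restrict D),
      (g₁ z + Complex.I * g₂ z) / 2 = μ z * ((g₁ z - Complex.I * g₂ z) / 2)

/-- `f` is a quasiconformal mapping of `ℂ` onto itself: a homeomorphism of the plane
with locally square-integrable first generalized derivatives satisfying a nondegenerate
Beltrami equation a.e. -/
def IsQCOfPlane (f : ℂ → ℂ) : Prop :=
  (∃ F : ℂ ≃ₜ ℂ, ⇑F = f) ∧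
  ∃ g₁ g₂ : ℂ → ℂ, HasWeakPartialsOn f g₁ g₂ Set.univ ∧
    (∀ K : Set ℂ, IsCompact K →
      MeasureTheory.IntegrableOn (fun z => ‖g₁ z‖ ^ 2) K volume ∧
      MeasureTheory.IntegrableOn (fun z => ‖g₂ z‖ ^ 2) K volume) ∧
    ∃ μ : ℂ → ℂ, Measurable μ ∧ (∃ k : ℝ, k < 1 ∧ ∀ᵐ z ∂volume, ‖μ z‖ ≤ k) ∧
      ∀ᵐ z ∂volume,
        (g₁ z + Complex.I * g₂ z) / 2 = μ z * ((g₁ z - Complex.I * g₂ z) / 2)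

/-- The gradient of `u : ℂ → ℝ` as a vector in `ℝ²`. -/
noncomputable def gradVec (u : ℂ → ℝ) (z : ℂ) : Fin 2 → ℝ :=
  ![fderiv ℝ u z 1, fderiv ℝ u z Complex.I]

/-- `g` is the weak (generalized) gradient of `u` on `D`. -/
def HasWeakGradOn (u : ℂ → ℝ) (g : ℂ → Fin 2 → ℝ) (D : Set ℂ) : Prop :=
  MeasureTheory.LocallyIntegrableOn u D volume ∧
  MeasureTheory.LocallyIntegrableOn g D volume ∧
  ∀ φ : ℂ → ℝ, ContDiff ℝ (⊤ : ℕ∞) φ → HasCompactSupport φ → tsupport φ ⊆ D →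
    (∫ z in D, u z * fderiv ℝ φ z 1) = -(∫ z in D, g z 0 * φ z) ∧
    (∫ z in D, u z * fderiv ℝ φ z Complex.I) = -(∫ z in D, g z 1 * φ z)

/-- The class `𝓑` of symmetric, measurable, essentially bounded, uniformly elliptic
matrix functions with determinant identically `1` on `D`. -/
def InClassB (A : ℂ → Matrix (Fin 2) (Fin 2) ℝ) (D : Set ℂ) : Prop :=
  (∀ i j, Measurable fun z => A z i j) ∧
  (∀ z ∈ D, (A z).IsSymm) ∧
  (∀ z ∈ D, (A z).det = 1) ∧
  (∃ M : ℝ, ∀ᵐ z ∂(volume.restrict D), ∀ i j, |A z i j| ≤ M) ∧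
  (∃ ε : ℝ, 0 < ε ∧ ∀ z ∈ D, ∀ η : Fin 2 → ℝ,
    ε * (η 0 ^ 2 + η 1 ^ 2) ≤ ∑ i, (A z).mulVec η i * η i)

/-- `u` is `A`-harmonic on `D` (continuous weak solution of `div(A ∇u) = 0`). -/
def IsAHarmonicOn (A : ℂ → Matrix (Fin 2) (Fin 2) ℝ) (u : ℂ → ℝ) (D : Set ℂ) : Prop :=
  ContinuousOn u D ∧ ∃ g : ℂ → Fin 2 → ℝ, HasWeakGradOn u g D ∧
    ∀ φ : ℂ → ℝ, ContDiff ℝ (⊤ : ℕ∞) φ → HasCompactSupport φ → tsupport φ ⊆ D →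
      (∫ z in D, ∑ i, (A z).mulVec (g z) i * gradVec φ z i) = 0

/-- `u` of class `C¹` is `A`-harmonic on `D`. -/
def IsAHarmonicC1On (A : ℂ → Matrix (Fin 2) (Fin 2) ℝ) (u : ℂ → ℝ) (D : Set ℂ) : Prop :=
  ContDiffOn ℝ 1 u D ∧
    ∀ φ : ℂ → ℝ, ContDiff ℝ (⊤ : ℕ∞) φ → HasCompactSupport φ → tsupport φ ⊆ D →
      (∫ z in D, ∑ i, (A z).mulVec (gradVec u z) i * gradVec φ z i) = 0

/-- `u` is of class `C^{1+α}` on `D`: continuously differentiable with locally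
`α`-Hölder continuous partial derivatives. -/
def IsC1HolderOn (u : ℂ → ℝ) (α : ℝ≥0) (D : Set ℂ) : Prop :=
  ContDiffOn ℝ 1 u D ∧ ∀ z ∈ D, ∃ r > (0 : ℝ), ∃ C : ℝ≥0,
    HolderOnWith C α (fun w => gradVec u w) (D ∩ Metric.ball z r)

/-- The entries of the matrix function `A` are locally `α`-Hölder continuous on `D`. -/
def EntriesLocHolderOn (A : ℂ → Matrix (Fin 2) (Fin 2) ℝ) (α : ℝ≥0) (D : Set ℂ) : Prop :=
  ∀ z ∈ D, ∃ r > (0 : ℝ), ∃ C : ℝ≥0, ∀ i j,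
    HolderOnWith C α (fun w => A w i j) (D ∩ Metric.ball z r)

/-- `n` is the interior unit normal to `∂D` at `ζ`: a unit vector orthogonal to a
tangent direction of `∂D` at `ζ` and pointing into `D`. -/
def IsInteriorNormalAt (D : Set ℂ) (ζ n : ℂ) : Prop :=
  ‖n‖ = 1 ∧
  (∃ e : ℂ, HasTangentVia (frontier D) ζ e ∧ (n * (starRingEnd ℂ) e).re = 0) ∧
  ∃ ε > (0 : ℝ), ∀ t : ℝ, 0 < t → t < ε → ζ + t • n ∈ D

end

namespace QC
open Complex Metric MeasureTheory Filter Topology Set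
open scoped ENNReal NNReal



lemma trans_tendsto {g : ℂ → ℂ} (hg : MemLp g 2 volume) :
    Tendsto (fun h : ℂ => eLpNorm (fun x => g (x - h) - g x) 2 volume) (𝓝 0) (𝓝 0) := by
  haveI : Fact ((2:ℝ≥0∞) ≠ ∞) := ⟨by simp⟩
  have hc : Continuous (fun h : ℂ => (DomAddAct.mk (-h)) +ᵥ (hg.toLp g)) := by
    have : Continuous (fun h : ℂ => (DomAddAct.mk (-h))) :=
      DomAddAct.continuous_mk.comp continuous_neg
    exact this.vadd continuous_const
  have h0 := hc.tendsto 0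
  rw [tendsto_iff_edist_tendsto_0] at h0
  refine h0.congr (fun h => ?_)
  rw [DomAddAct.mk_vadd_toLp, DomAddAct.mk_vadd_toLp, Lp.edist_toLp_toLp]
  congr 1
  ext x
  simp [sub_eq_neg_add]

lemma cs_lintegral {α : Type*} [MeasurableSpace α] (μ : Measure α) {a b : α → ℝ≥0∞}
    (ha : AEMeasurable a μ) (hb : AEMeasurable b μ) :
    (∫⁻ x, a x * b x ∂μ) ^ 2 ≤ (∫⁻ x, a x ^ 2 ∂μ) * (∫⁻ x, b x ^ 2 ∂μ) := by
  have h := ENNReal.lintegral_mul_le_Lp_mul_Lq μ (p := 2) (q := 2)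
    (by rw [Real.holderConjugate_iff]; norm_num) ha hb
  have h2 := pow_le_pow_left' h 2
  refine h2.trans (le_of_eq ?_)
  rw [mul_pow, ← ENNReal.rpow_natCast, ← ENNReal.rpow_natCast, ← ENNReal.rpow_mul,
    ← ENNReal.rpow_mul]
  norm_num

lemma eLpNorm_two_sq {α : Type*} [MeasurableSpace α] (μ : Measure α) (f : α → ℂ) :
    eLpNorm f 2 μ ^ 2 = ∫⁻ x, ‖f x‖ₑ ^ 2 ∂μ := by
  rw [eLpNorm_eq_lintegral_rpow_enorm_toReal (by simp) (by simp),
    ← ENNReal.rpow_natCast, ← ENNReal.rpow_mul]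
  norm_num

/-- convolution by a bump -/
noncomputable def moll (φ : ContDiffBump (0:ℂ)) (g : ℂ → ℂ) : ℂ → ℂ := fun x => ∫ t, (φ.normed volume t) • g (x - t)

lemma moll_congr (φ : ContDiffBump (0:ℂ)) {g g' : ℂ → ℂ} (h : g =ᵐ[volume] g') :
    moll φ g = moll φ g' := by
  ext x
  apply integral_congr_ae
  have := (quasiMeasurePreserving_sub_left_of_right_invariant volume x).ae_eq_comp h
  filter_upwards [this] with t ht
  simp only [Function.comp] at ht
  rw [ht]

lemma moll_sub_le (φ : ContDiffBump (0:ℂ)) {g : ℂ → ℂ} (hgm : StronglyMeasurable g)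
    (hg : MemLp g 2 volume) (ε : ℝ≥0∞)
    (h : ∀ t : ℂ, ‖t‖ < φ.rOut → eLpNorm (fun x => g (x - t) - g x) 2 volume ≤ ε) :
    eLpNorm (fun x => moll φ g x - g x) 2 volume ≤ ε := by
  have hli : LocallyIntegrable g volume := hg.locallyIntegrable (by norm_num)
  set w : ℂ → ℝ≥0∞ := fun t => ENNReal.ofReal (φ.normed volume t) with hw
  have hwm : Measurable w := by
    exact (φ.continuous_normed.measurable).ennreal_ofReal
  have hw1 : ∫⁻ t, w t = 1 := by
    rw [hw, ← ofReal_integral_eq_lintegral_ofReal φ.integrable_normed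
      (ae_of_all _ (fun x => φ.nonneg_normed x)), φ.integral_normed]
    simp
  have key : ∀ x, ‖moll φ g x - g x‖ₑ ^ 2 ≤ ∫⁻ t, w t * ‖g (x - t) - g x‖ₑ ^ 2 := by
    intro x
    have hint : Integrable (fun t => (φ.normed volume t) • g (x - t)) volume := by
      have := HasCompactSupport.convolutionExists_left (μ := volume) (f := φ.normed volume) (g := g)
        (ContinuousLinearMap.lsmul ℝ ℝ) φ.hasCompactSupport_normed φ.continuous_normed hli x
      exact this
    have e1 : moll φ g x - g x = ∫ t, (φ.normed volume t) • (g (x - t) - g x) := by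
      simp_rw [smul_sub]
      rw [integral_sub hint (φ.integrable_normed.smul_const _), integral_smul_const,
        φ.integral_normed, one_smul]
      rfl
    have e2 : ‖moll φ g x - g x‖ₑ ≤ ∫⁻ t, w t * ‖g (x - t) - g x‖ₑ := by
      rw [e1]
      refine (enorm_integral_le_lintegral_enorm _).trans (le_of_eq ?_)
      congr 1; ext t
      rw [enorm_smul, Real.enorm_eq_ofReal (φ.nonneg_normed t)]
    have hm : Measurable (fun t => ‖g (x - t) - g x‖ₑ) := by
      have : Measurable g := hgm.measurable
      fun_prop
    have e3 : ∫⁻ t, w t * ‖g (x - t) - g x‖ₑ =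
        ∫⁻ t, w t ^ (1/2:ℝ) * (w t ^ (1/2:ℝ) * ‖g (x - t) - g x‖ₑ) := by
      congr 1; ext t
      rw [← mul_assoc, ← ENNReal.rpow_add_of_nonneg _ _ (by norm_num) (by norm_num)]
      norm_num
    have hs : ∀ t, (w t ^ (1/2:ℝ)) ^ 2 = w t := by
      intro t
      rw [← ENNReal.rpow_natCast, ← ENNReal.rpow_mul]; norm_num
    calc ‖moll φ g x - g x‖ₑ ^ 2 ≤ (∫⁻ t, w t * ‖g (x - t) - g x‖ₑ) ^ 2 :=
          pow_le_pow_left' e2 2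
      _ ≤ (∫⁻ t, (w t ^ (1/2:ℝ)) ^ 2) * ∫⁻ t, (w t ^ (1/2:ℝ) * ‖g (x - t) - g x‖ₑ) ^ 2 := by
          rw [e3]
          apply cs_lintegral
          · fun_prop
          · fun_prop
      _ = ∫⁻ t, w t * ‖g (x - t) - g x‖ₑ ^ 2 := by
          simp_rw [mul_pow, hs, hw1, one_mul]
  have : eLpNorm (fun x => moll φ g x - g x) 2 volume ^ 2 ≤ ε ^ 2 := by
    rw [eLpNorm_two_sq]
    calc ∫⁻ x, ‖moll φ g x - g x‖ₑ ^ 2 ≤ ∫⁻ x, ∫⁻ t, w t * ‖g (x - t) - g x‖ₑ ^ 2 :=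
          lintegral_mono key
      _ = ∫⁻ t, ∫⁻ x, w t * ‖g (x - t) - g x‖ₑ ^ 2 := by
          apply lintegral_lintegral_swap
          have : Measurable g := hgm.measurable
          apply Measurable.aemeasurable
          unfold Function.uncurry
          fun_prop
      _ = ∫⁻ t, w t * eLpNorm (fun x => g (x - t) - g x) 2 volume ^ 2 := by
          congr 1; ext t
          rw [lintegral_const_mul, eLpNorm_two_sq]
          have : Measurable g := hgm.measurable
          fun_prop
      _ ≤ ∫⁻ t, w t * ε ^ 2 := by
          apply lintegral_mono
          intro t
          by_cases ht : ‖t‖ < φ.rOut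
          · exact mul_le_mul_right (pow_le_pow_left' (h t ht) 2) _
          · have : w t = 0 := by
              simp only [hw]
              have : t ∉ Function.support (φ.normed volume) := by
                rw [φ.support_normed_eq]; simpa using ht
              rw [Function.notMem_support.mp this]; simp
            simp [this]
      _ = ε ^ 2 := by rw [lintegral_mul_const _ hwm, hw1, one_mul]
  exact (ENNReal.pow_le_pow_left_iff (two_ne_zero)).mp this

/-- bump sequence -/
noncomputable def bmp (n : ℕ) : ContDiffBump (0:ℂ) :=
  ⟨1 / (2 * ((n:ℝ) + 1)), 1 / ((n:ℝ) + 1), by positivity, by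
    apply one_div_lt_one_div_of_lt
    · positivity
    · have : (0:ℝ) ≤ n := n.cast_nonneg
      linarith⟩

lemma bmp_rOut (n : ℕ) : (bmp n).rOut = 1 / ((n:ℝ) + 1) := rfl

lemma bmp_tendsto : Tendsto (fun n => (bmp n).rOut) atTop (𝓝 0) := by
  simp_rw [bmp_rOut]; exact tendsto_one_div_add_atTop_nhds_zero_nat

lemma bmp_le (n : ℕ) : (bmp n).rOut ≤ 1 := by
  rw [bmp_rOut, div_le_one (by positivity)]
  have : (0:ℝ) ≤ n := n.cast_nonneg
  linarith

lemma moll_L2 {g : ℂ → ℂ} (hg : MemLp g 2 volume) :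
    Tendsto (fun n => eLpNorm (fun x => moll (bmp n) g x - g x) 2 volume) atTop (𝓝 0) := by
  wlog hm : StronglyMeasurable g generalizing g
  · have hae := hg.1.ae_eq_mk
    have := this ((memLp_congr_ae hae).mp hg) hg.1.stronglyMeasurable_mk
    refine this.congr (fun n => ?_)
    rw [← moll_congr _ hae]
    apply eLpNorm_congr_ae
    filter_upwards [hae] with x hx
    rw [hx]
  rw [ENNReal.tendsto_nhds_zero]
  intro ε hε
  have := (ENNReal.tendsto_nhds_zero.mp (trans_tendsto hg)) ε hε
  rw [Metric.eventually_nhds_iff] at this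
  obtain ⟨δ, hδ, h⟩ := this
  have h2 := bmp_tendsto.eventually (gt_mem_nhds hδ)
  filter_upwards [h2] with n hn
  apply moll_sub_le _ hm hg
  intro t ht
  apply h
  rw [dist_zero_right]; linarith

lemma moll_L2_loc {g : ℂ → ℂ} (hg : LocallyIntegrable g volume)
    (hg2 : ∀ K : Set ℂ, IsCompact K → IntegrableOn (fun z => ‖g z‖ ^ 2) K volume) (R : ℝ) :
    Tendsto (fun n => eLpNorm (fun x => moll (bmp n) g x - g x) 2
      (volume.restrict (closedBall 0 R))) atTop (𝓝 0) := by
  set G := (closedBall (0:ℂ) (R+1)).indicator g with hG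
  have hGm : MemLp G 2 volume := by
    rw [hG, memLp_indicator_iff_restrict measurableSet_closedBall, memLp_two_iff_integrable_sq_norm]
    · exact hg2 _ (isCompact_closedBall _ _)
    · exact (hg.integrableOn_isCompact (isCompact_closedBall _ _)).1
  refine tendsto_of_tendsto_of_tendsto_of_le_of_le tendsto_const_nhds (moll_L2 hGm)
    (fun _ => zero_le) (fun n => ?_)
  calc _ = eLpNorm (fun x => moll (bmp n) G x - G x) 2 (volume.restrict (closedBall 0 R)) := by
        apply eLpNorm_congr_ae
        filter_upwards [ae_restrict_mem measurableSet_closedBall] with x hx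
        rw [mem_closedBall_zero_iff] at hx
        have h1 : G x = g x := by
          rw [hG, indicator_of_mem]
          rw [mem_closedBall_zero_iff]; linarith
        rw [h1]
        congr 1
        apply integral_congr_ae
        refine ae_of_all _ (fun t => ?_)
        by_cases ht : ‖t‖ < (bmp n).rOut
        · have : G (x - t) = g (x - t) := by
            rw [hG, indicator_of_mem]
            rw [mem_closedBall_zero_iff]
            have := norm_sub_le x t
            have := bmp_le n
            linarith
          simp only [this]
        · have : (bmp n).normed volume t = 0 := by
            have : t ∉ Function.support ((bmp n).normed volume) := by
              rw [(bmp n).support_normed_eq]; simpa using ht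
            exact Function.notMem_support.mp this
          simp [this]
    _ ≤ _ := eLpNorm_mono_measure _ Measure.restrict_le_self

end QC

namespace QC
open Complex Metric MeasureTheory Filter Topology Set
open scoped ENNReal NNReal



open scoped Convolution in
lemma moll_eq (φ : ContDiffBump (0:ℂ)) (g : ℂ → ℂ) :
    moll φ g = (φ.normed volume) ⋆[ContinuousLinearMap.lsmul ℝ ℝ, volume] g := rfl

lemma moll_contDiff (φ : ContDiffBump (0:ℂ)) {g : ℂ → ℂ} (hg : LocallyIntegrable g volume) :
    ContDiff ℝ (⊤ : ℕ∞) (moll φ g) := by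
  rw [moll_eq]
  exact φ.hasCompactSupport_normed.contDiff_convolution_left _ φ.contDiff_normed hg

lemma moll_fderiv (φ : ContDiffBump (0:ℂ)) {f g : ℂ → ℂ} (hf : LocallyIntegrable f volume) (e : ℂ)
    (hw : ∀ ψ : ℂ → ℝ, ContDiff ℝ (⊤ : ℕ∞) ψ → HasCompactSupport ψ →
      (∫ z, f z * (fderiv ℝ ψ z e : ℂ)) = -(∫ z, g z * (ψ z : ℂ))) (x : ℂ) :
    fderiv ℝ (moll φ f) x e = moll φ g x := by
  have hφ1 : ContDiff ℝ 1 (φ.normed (volume : Measure ℂ)) := φ.contDiff_normed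
  have h1 := φ.hasCompactSupport_normed.hasFDerivAt_convolution_left
    (μ := volume) (ContinuousLinearMap.lsmul ℝ ℝ) hφ1 hf x
  rw [moll_eq, h1.fderiv]
  have hex := (φ.hasCompactSupport_normed.fderiv ℝ).convolutionExists_left (μ := volume)
    (ContinuousLinearMap.precompL ℂ (ContinuousLinearMap.lsmul ℝ ℝ : ℝ →L[ℝ] ℂ →L[ℝ] ℂ))
    (hφ1.continuous_fderiv one_ne_zero) hf x
  rw [convolution_def, ContinuousLinearMap.integral_apply hex]
  have e1 : ∀ t, ((ContinuousLinearMap.precompL ℂ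
      (ContinuousLinearMap.lsmul ℝ ℝ : ℝ →L[ℝ] ℂ →L[ℝ] ℂ)) (fderiv ℝ (φ.normed volume) t)
        (f (x - t))) e = (fderiv ℝ (φ.normed volume) t e) • f (x - t) := fun t => rfl
  simp_rw [e1]
  rw [← integral_sub_left_eq_self _ volume x]
  set ψ : ℂ → ℝ := fun t => φ.normed volume (x - t) with hψ
  have hψd : ContDiff ℝ (⊤ : ℕ∞) ψ := by
    have : ContDiff ℝ (⊤ : ℕ∞) (φ.normed (volume : Measure ℂ)) := φ.contDiff_normed
    exact this.comp (contDiff_const.sub contDiff_id)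
  have hψc : HasCompactSupport ψ :=
    φ.hasCompactSupport_normed.comp_homeomorph (Homeomorph.subLeft x)
  have hfd : ∀ t, fderiv ℝ ψ t e = - fderiv ℝ (φ.normed volume) (x - t) e := by
    intro t
    have h2 : HasFDerivAt (fun t : ℂ => x - t) (-(ContinuousLinearMap.id ℝ ℂ)) t := by
      simpa using (hasFDerivAt_id (𝕜 := ℝ) t).const_sub x
    have h3 := ((hφ1.differentiable one_ne_zero) (x - t)).hasFDerivAt.comp t h2
    have h4 : fderiv ℝ ψ t = _ := h3.fderiv
    rw [h4]; simp
  have := hw ψ hψd hψc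
  simp_rw [hfd] at this
  simp only [sub_sub_cancel]
  have e3 : moll φ g x = ∫ z, g z * (ψ z : ℂ) := by
    unfold moll
    rw [← integral_sub_left_eq_self _ volume x]
    simp [hψ, mul_comm]
  rw [e3, eq_comm, ← neg_inj, ← this]
  simp only [real_smul, ofReal_neg, mul_neg, integral_neg]
  congr 2; ext t; ring

lemma moll_unif {f : ℂ → ℂ} (hf : Continuous f) (R : ℝ) :
    TendstoUniformlyOn (fun n => moll (bmp n) f) f atTop (closedBall 0 R) := by
  rw [Metric.tendstoUniformlyOn_iff]
  intro ε hε
  have huc := (isCompact_closedBall (0:ℂ) (R+1)).uniformContinuousOn_of_continuous hf.continuousOn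
  rw [Metric.uniformContinuousOn_iff] at huc
  obtain ⟨δ, hδ, h⟩ := huc (ε/2) (by positivity)
  filter_upwards [bmp_tendsto.eventually (gt_mem_nhds hδ)] with n hn x hx
  rw [dist_comm, moll_eq]
  refine lt_of_le_of_lt ((bmp n).dist_normed_convolution_le (ε := ε/2) hf.aestronglyMeasurable ?_)
    (by linarith)
  intro y hy
  rw [mem_ball] at hy
  have hb := bmp_le n
  rw [mem_closedBall] at hx
  refine (h y ?_ x ?_ (by linarith)).le
  · rw [mem_closedBall]
    have := dist_triangle y x 0
    linarith
  · rw [mem_closedBall]; linarith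

/-- smooth approximation package -/
structure Approx (f g₁ g₂ : ℂ → ℂ) (F : ℕ → ℂ → ℂ) : Prop where
  smooth : ∀ n, ContDiff ℝ (⊤ : ℕ∞) (F n)
  unif : ∀ R, TendstoUniformlyOn F f atTop (closedBall 0 R)
  L1 : ∀ R, Tendsto (fun n => eLpNorm (fun x => fderiv ℝ (F n) x 1 - g₁ x) 2
      (volume.restrict (closedBall 0 R))) atTop (𝓝 0)
  L2 : ∀ R, Tendsto (fun n => eLpNorm (fun x => fderiv ℝ (F n) x I - g₂ x) 2
      (volume.restrict (closedBall 0 R))) atTop (𝓝 0)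

lemma exists_approx {f g₁ g₂ : ℂ → ℂ} (hc : Continuous f)
    (hw : HasWeakPartialsOn f g₁ g₂ Set.univ)
    (h2 : ∀ K : Set ℂ, IsCompact K →
      MeasureTheory.IntegrableOn (fun z => ‖g₁ z‖ ^ 2) K volume ∧
      MeasureTheory.IntegrableOn (fun z => ‖g₂ z‖ ^ 2) K volume) :
    ∃ F, Approx f g₁ g₂ F := by
  obtain ⟨hf, hg1, hg2, hw⟩ := hw
  rw [locallyIntegrableOn_univ] at hf hg1 hg2
  simp only [subset_univ, forall_const, Measure.restrict_univ] at hw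
  refine ⟨fun n => moll (bmp n) f, fun n => moll_contDiff _ hf, moll_unif hc, fun R => ?_, fun R => ?_⟩
  · simp_rw [moll_fderiv _ hf 1 (fun ψ h h' => (hw ψ h h').1)]
    exact moll_L2_loc hg1 (fun K hK => (h2 K hK).1) R
  · simp_rw [moll_fderiv _ hf I (fun ψ h h' => (hw ψ h h').2)]
    exact moll_L2_loc hg2 (fun K hK => (h2 K hK).2) R

end QC

namespace QC
open Complex Metric MeasureTheory Filter Topology Set
open scoped ENNReal NNReal



lemma lim2 {α : Type*} [MeasurableSpace α] {μ : Measure α} {xn bn : ℕ → α → ℝ} {x b : α → ℝ}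
    (hxn : ∀ n, MemLp (xn n) 2 μ) (hx : MemLp x 2 μ)
    (hbn : ∀ n, MemLp (bn n) 2 μ) (hb : MemLp b 2 μ)
    (h1 : Tendsto (fun n => eLpNorm (fun z => xn n z - x z) 2 μ) atTop (𝓝 0))
    (h2 : Tendsto (fun n => eLpNorm (fun z => bn n z - b z) 2 μ) atTop (𝓝 0)) :
    Tendsto (fun n => ∫ z, xn n z * bn n z ∂μ) atTop (𝓝 (∫ z, x z * b z ∂μ)) := by
  have H : ∀ {u v : α → ℝ} (hu : MemLp u 2 μ) (hv : MemLp v 2 μ),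
      ∫ z, u z * v z ∂μ = inner ℝ (hv.toLp v) (hu.toLp u) := by
    intro u v hu hv
    rw [L2.inner_def]
    apply integral_congr_ae
    filter_upwards [hu.coeFn_toLp, hv.coeFn_toLp] with z h h'
    rw [h, h']; simp
  rw [H hx hb]
  simp_rw [fun n => H (hxn n) (hbn n)]
  apply Tendsto.inner
  · rw [tendsto_iff_edist_tendsto_0]
    refine h2.congr (fun n => ?_)
    rw [Lp.edist_toLp_toLp]; rfl
  · rw [tendsto_iff_edist_tendsto_0]
    refine h1.congr (fun n => ?_)
    rw [Lp.edist_toLp_toLp]; rfl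

lemma lim3 {A : Set ℂ} (hA : MeasurableSet A) {θn an bn : ℕ → ℂ → ℝ} {θ a b : ℂ → ℝ}
    (hθm : ∀ n, AEStronglyMeasurable (θn n) (volume.restrict A))
    (hθm' : AEStronglyMeasurable θ (volume.restrict A))
    (hθb : ∀ n, ∃ M, ∀ x ∈ A, |θn n x| ≤ M) (hθb' : ∃ M, ∀ x ∈ A, |θ x| ≤ M)
    (hu : TendstoUniformlyOn θn θ atTop A)
    (han : ∀ n, MemLp (an n) 2 (volume.restrict A)) (ha : MemLp a 2 (volume.restrict A))
    (hbn : ∀ n, MemLp (bn n) 2 (volume.restrict A)) (hb : MemLp b 2 (volume.restrict A))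
    (h1 : Tendsto (fun n => eLpNorm (fun z => an n z - a z) 2 (volume.restrict A)) atTop (𝓝 0))
    (h2 : Tendsto (fun n => eLpNorm (fun z => bn n z - b z) 2 (volume.restrict A)) atTop (𝓝 0)) :
    Tendsto (fun n => ∫ z in A, θn n z * an n z * bn n z) atTop
      (𝓝 (∫ z in A, θ z * a z * b z)) := by
  have hmem : ∀ {t u : ℂ → ℝ}, AEStronglyMeasurable t (volume.restrict A) →
      (∃ M, ∀ x ∈ A, |t x| ≤ M) → MemLp u 2 (volume.restrict A) →
      MemLp (fun z => t z * u z) 2 (volume.restrict A) := by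
    rintro t u ht ⟨M, hM⟩ hu
    refine MemLp.of_le_mul (c := M) hu (ht.mul hu.1) ?_
    filter_upwards [ae_restrict_mem hA] with z hz
    rw [norm_mul]
    exact mul_le_mul_of_nonneg_right (hM z hz) (norm_nonneg _)
  refine lim2 (fun n => hmem (hθm n) (hθb n) (han n)) (hmem hθm' hθb' ha) hbn hb ?_ h2
  obtain ⟨M, hM⟩ := hθb'
  rw [ENNReal.tendsto_nhds_zero]
  intro ε hε
  have hε2 : ε / 2 ≠ 0 := (ENNReal.half_pos hε.ne').ne'
  obtain ⟨δ, hδ, hδa⟩ := ENNReal.exists_nnreal_pos_mul_lt ha.2.ne hε2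
  have h1' : Tendsto (fun n => ENNReal.ofReal (|M| + 1) *
      eLpNorm (fun z => an n z - a z) 2 (volume.restrict A)) atTop (𝓝 0) := by
    have := ENNReal.Tendsto.const_mul (a := ENNReal.ofReal (|M| + 1)) h1 (Or.inr (by simp))
    simpa using this
  rw [Metric.tendstoUniformlyOn_iff] at hu
  filter_upwards [hu δ hδ, hu 1 one_pos,
    (ENNReal.tendsto_nhds_zero.mp h1') (ε/2) (ENNReal.half_pos hε.ne')] with n hn1 hn2 hn3
  have e : (fun z => θn n z * an n z - θ z * a z) =
      (fun z => θn n z * (an n z - a z)) + (fun z => (θn n z - θ z) * a z) := by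
    ext z; simp; ring
  rw [e]
  refine (eLpNorm_add_le ((hθm n).mul ((han n).1.sub ha.1)) (((hθm n).sub hθm').mul ha.1)
    (by norm_num)).trans ?_
  rw [← ENNReal.add_halves ε]
  gcongr
  · refine (eLpNorm_le_mul_eLpNorm_of_ae_le_mul (c := |M| + 1) ?_ 2).trans hn3
    filter_upwards [ae_restrict_mem hA] with z hz
    simp only [Pi.mul_apply, Pi.sub_apply, norm_mul]
    refine mul_le_mul_of_nonneg_right ?_ (norm_nonneg _)
    have := hn2 z hz
    rw [Real.dist_eq] at this
    have h3 := hM z hz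
    have h4 := le_abs_self M
    rw [Real.norm_eq_abs]
    have := abs_sub_abs_le_abs_sub (θn n z) (θ z)
    rw [abs_sub_comm] at this
    linarith
  · refine (eLpNorm_le_mul_eLpNorm_of_ae_le_mul (c := δ) (g := a) ?_ 2).trans ?_
    · filter_upwards [ae_restrict_mem hA] with z hz
      simp only [Pi.mul_apply, Pi.sub_apply, norm_mul]
      refine mul_le_mul_of_nonneg_right ?_ (norm_nonneg _)
      have := hn1 z hz
      rw [dist_comm, Real.dist_eq] at this
      exact this.le
    · rw [ENNReal.ofReal_coe_nnreal]
      exact hδa.le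

lemma unif_comp {f : ℂ → ℂ} (hf : Continuous f) {F : ℕ → ℂ → ℂ} {R : ℝ}
    (hu : TendstoUniformlyOn F f atTop (closedBall 0 R))
    {χ k : ℂ → ℝ} (hχ : Continuous χ) (hk : Continuous k) :
    TendstoUniformlyOn (fun n z => χ z * k (F n z)) (fun z => χ z * k (f z)) atTop
      (closedBall 0 R) := by
  obtain ⟨M, hM⟩ := (isCompact_closedBall (0:ℂ) R).exists_bound_of_continuousOn hf.continuousOn
  obtain ⟨C, hC⟩ := (isCompact_closedBall (0:ℂ) R).exists_bound_of_continuousOn hχ.continuousOn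
  have huc := (isCompact_closedBall (0:ℂ) (M+1)).uniformContinuousOn_of_continuous hk.continuousOn
  rw [Metric.uniformContinuousOn_iff] at huc
  rw [Metric.tendstoUniformlyOn_iff] at hu ⊢
  intro ε hε
  obtain ⟨δ, hδ, h⟩ := huc (ε / (|C| + 1)) (by positivity)
  filter_upwards [hu δ hδ, hu 1 one_pos] with n h1 h2 z hz
  have ha := hM z hz
  have hb := hC z hz
  have hc := h2 z hz
  have hd := h (f z) (by rw [mem_closedBall_zero_iff]; linarith) (F n z) (by
    rw [mem_closedBall_zero_iff]
    rw [dist_comm, dist_eq_norm] at hc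
    have := norm_le_norm_add_norm_sub' (F n z) (f z)
    linarith) (h1 z hz)
  rw [Real.dist_eq] at hd ⊢
  rw [← mul_sub, abs_mul]
  have h3 : |χ z| < |C| + 1 := by
    have := le_abs_self C
    rw [Real.norm_eq_abs] at hb; linarith
  calc |χ z| * |k (f z) - k (F n z)| ≤ (|C| + 1) * |k (f z) - k (F n z)| := by gcongr
    _ < (|C| + 1) * (ε / (|C| + 1)) := by gcongr
    _ = ε := by field_simp

lemma memLp_ball {E : Type*} [NormedAddCommGroup E] {g : ℂ → E} (hg : Continuous g) (R : ℝ) :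
    MemLp g 2 (volume.restrict (closedBall 0 R)) := by
  have hfin : IsFiniteMeasure (volume.restrict (closedBall (0:ℂ) R)) :=
    ⟨by rw [Measure.restrict_apply_univ]; exact measure_closedBall_lt_top⟩
  obtain ⟨M, hM⟩ := (isCompact_closedBall (0:ℂ) R).exists_bound_of_continuousOn hg.continuousOn
  refine MemLp.of_bound (hg.continuousOn.aestronglyMeasurable_of_isCompact
    (isCompact_closedBall _ _) measurableSet_closedBall) M ?_
  filter_upwards [ae_restrict_mem measurableSet_closedBall] with z hz using hM z hz

/-- main limit lemma -/
lemma lim_main {f : ℂ → ℂ} (hf : Continuous f) {F : ℕ → ℂ → ℂ} {R : ℝ} {A : Set ℂ}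
    (hA : MeasurableSet A) (hAR : A ⊆ closedBall 0 R)
    (hu : TendstoUniformlyOn F f atTop (closedBall 0 R)) (hFc : ∀ n, Continuous (F n))
    {pn qn : ℕ → ℂ → ℂ} {p q : ℂ → ℂ} (hpn : ∀ n, MemLp (pn n) 2 (volume.restrict (closedBall 0 R)))
    (hqn : ∀ n, MemLp (qn n) 2 (volume.restrict (closedBall 0 R)))
    (hp : MemLp p 2 (volume.restrict (closedBall 0 R)))
    (hq : MemLp q 2 (volume.restrict (closedBall 0 R)))
    (h1 : Tendsto (fun n => eLpNorm (fun z => pn n z - p z) 2 (volume.restrict (closedBall 0 R)))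
      atTop (𝓝 0))
    (h2 : Tendsto (fun n => eLpNorm (fun z => qn n z - q z) 2 (volume.restrict (closedBall 0 R)))
      atTop (𝓝 0))
    (α β : ℂ →L[ℝ] ℝ) (hα : ∀ z, ‖α z‖ ≤ ‖z‖) (hβ : ∀ z, ‖β z‖ ≤ ‖z‖)
    {χ k : ℂ → ℝ} (hχ : Continuous χ) (hk : Continuous k) :
    Tendsto (fun n => ∫ z in A, χ z * k (F n z) * α (pn n z) * β (qn n z)) atTop
      (𝓝 (∫ z in A, χ z * k (f z) * α (p z) * β (q z))) := by
  have hle : volume.restrict A ≤ volume.restrict (closedBall (0:ℂ) R) :=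
    Measure.restrict_mono hAR le_rfl
  have hbd : ∀ {g : ℂ → ℝ}, Continuous g → ∃ M, ∀ x ∈ A, |g x| ≤ M := by
    intro g hg
    obtain ⟨M, hM⟩ := (isCompact_closedBall (0:ℂ) R).exists_bound_of_continuousOn hg.continuousOn
    exact ⟨M, fun x hx => hM x (hAR hx)⟩
  have hlin : ∀ (γ : ℂ →L[ℝ] ℝ), (∀ z, ‖γ z‖ ≤ ‖z‖) → ∀ {un : ℕ → ℂ → ℂ} {u : ℂ → ℂ},
      Tendsto (fun n => eLpNorm (fun z => un n z - u z) 2 (volume.restrict (closedBall 0 R)))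
      atTop (𝓝 0) →
      Tendsto (fun n => eLpNorm (fun z => γ (un n z) - γ (u z)) 2 (volume.restrict A))
      atTop (𝓝 0) := by
    intro γ hγ un u h
    refine tendsto_of_tendsto_of_tendsto_of_le_of_le tendsto_const_nhds h
      (fun _ => zero_le) (fun n => ?_)
    refine (eLpNorm_mono_measure _ hle).trans ?_
    apply eLpNorm_mono
    intro z
    rw [← map_sub]; exact hγ _
  have hml : ∀ (γ : ℂ →L[ℝ] ℝ) {u : ℂ → ℂ}, MemLp u 2 (volume.restrict (closedBall 0 R)) →
      MemLp (fun z => γ (u z)) 2 (volume.restrict A) := by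
    intro γ u hu
    exact γ.comp_memLp' (hu.mono_measure hle)
  refine lim3 hA (fun n => (hχ.mul (hk.comp (hFc n))).aestronglyMeasurable)
    (hχ.mul (hk.comp hf)).aestronglyMeasurable (fun n => hbd (hχ.mul (hk.comp (hFc n))))
    (hbd (hχ.mul (hk.comp hf))) ((unif_comp hf hu hχ hk).mono hAR)
    (fun n => hml α (hpn n)) (hml α hp)
    (fun n => hml β (hqn n)) (hml β hq) (hlin α hα h1) (hlin β hβ h2)

end QC

namespace QC
open Complex Metric MeasureTheory Filter Topology Set
open scoped ENNReal NNReal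



lemma closed_form {f g₁ g₂ : ℂ → ℂ} (hw : HasWeakPartialsOn f g₁ g₂ Set.univ)
    {φ : ℂ → ℝ} (hφ : ContDiff ℝ (⊤ : ℕ∞) φ) (hc : HasCompactSupport φ) :
    ∫ z, g₂ z * (fderiv ℝ φ z 1 : ℂ) = ∫ z, g₁ z * (fderiv ℝ φ z I : ℂ) := by
  obtain ⟨-, -, -, hw⟩ := hw
  simp only [subset_univ, forall_const, Measure.restrict_univ] at hw
  have hd : ∀ e : ℂ, ContDiff ℝ (⊤ : ℕ∞) (fun z => fderiv ℝ φ z e) := by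
    intro e
    have : ContDiff ℝ (⊤ : ℕ∞) (fderiv ℝ φ) := by
      apply hφ.fderiv_right; simp
    exact this.clm_apply contDiff_const
  have hdc : ∀ e : ℂ, HasCompactSupport (fun z => fderiv ℝ φ z e) := fun e => hc.fderiv_apply ℝ e
  have h1 := (hw _ (hd 1) (hdc 1)).2
  have h2 := (hw _ (hd I) (hdc I)).1
  have hs : ∀ z, fderiv ℝ (fun z => fderiv ℝ φ z 1) z I = fderiv ℝ (fun z => fderiv ℝ φ z I) z 1 := by
    intro z
    have hdd : DifferentiableAt ℝ (fderiv ℝ φ) z := by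
      have : ContDiff ℝ 1 (fderiv ℝ φ) := by
        apply hφ.fderiv_right
        exact WithTop.coe_le_coe.mpr (le_top : ((1 + 1 : ℕ∞)) ≤ ⊤)
      exact (this.differentiable one_ne_zero) z
    have e : ∀ a b : ℂ, fderiv ℝ (fun z => fderiv ℝ φ z a) z b = fderiv ℝ (fderiv ℝ φ) z b a := by
      intro a b
      rw [fderiv_clm_apply hdd (differentiableAt_const _)]
      simp
    rw [e, e]
    have hsym : IsSymmSndFDerivAt ℝ φ z := by
      apply hφ.contDiffAt.isSymmSndFDerivAt
      simp only [minSmoothness_of_isRCLikeNormedField]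
      exact WithTop.coe_le_coe.mpr (le_top : ((2 : ℕ∞)) ≤ ⊤)
    exact hsym I 1
  simp_rw [hs] at h1
  rw [h1, neg_inj] at h2
  exact h2

/-- Jacobian -/
noncomputable def Jac (g₁ g₂ : ℂ → ℂ) (z : ℂ) : ℝ := (g₁ z).re * (g₂ z).im - (g₁ z).im * (g₂ z).re

lemma fderiv_split (η : ℂ → ℝ) (w p : ℂ) :
    fderiv ℝ η w p = p.re * fderiv ℝ η w 1 + p.im * fderiv ℝ η w I := by
  have : p = p.re • (1:ℂ) + p.im • I := by
    simp [Complex.re_add_im]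
  conv_lhs => rw [this]
  rw [map_add, map_smul, map_smul]; rfl

lemma int_mul3 {A : Set ℂ} (hA : MeasurableSet A) {θ a b : ℂ → ℝ}
    (hθ : AEStronglyMeasurable θ (volume.restrict A)) (hb : ∃ M, ∀ x ∈ A, |θ x| ≤ M)
    (ha : MemLp a 2 (volume.restrict A)) (hb2 : MemLp b 2 (volume.restrict A)) :
    IntegrableOn (fun z => θ z * a z * b z) A := by
  obtain ⟨M, hM⟩ := hb
  have : MemLp (fun z => θ z * a z) 2 (volume.restrict A) := by
    refine MemLp.of_le_mul (c := M) ha (hθ.mul ha.1) ?_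
    filter_upwards [ae_restrict_mem hA] with z hz
    rw [norm_mul]
    exact mul_le_mul_of_nonneg_right (hM z hz) (norm_nonneg _)
  exact this.integrable_mul hb2

lemma null_aux {f g₁ g₂ : ℂ → ℂ} {F : ℕ → ℂ → ℂ} (hf : Continuous f)
    (hw : HasWeakPartialsOn f g₁ g₂ Set.univ)
    (hF : Approx f g₁ g₂ F) {R : ℝ}
    (hm1 : MemLp g₁ 2 (volume.restrict (closedBall 0 R)))
    (hm2 : MemLp g₂ 2 (volume.restrict (closedBall 0 R)))
    {η χ : ℂ → ℝ} (hη : ContDiff ℝ (⊤ : ℕ∞) η) (hχ : ContDiff ℝ (⊤ : ℕ∞) χ)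
    (hχc : tsupport χ ⊆ closedBall 0 R) (γ : ℂ →L[ℝ] ℝ) (hγ : ∀ z, ‖γ z‖ ≤ ‖z‖) :
    ∫ z in closedBall 0 R, (fderiv ℝ χ z 1 * η (f z) * γ (g₂ z)
        - fderiv ℝ χ z I * η (f z) * γ (g₁ z) +
      χ z * (fderiv ℝ η (f z) (g₁ z) * γ (g₂ z) - fderiv ℝ η (f z) (g₂ z) * γ (g₁ z))) = 0 := by
  set A := closedBall (0:ℂ) R with hAdef
  have hA : MeasurableSet A := measurableSet_closedBall
  have hFc : ∀ n, Continuous (F n) := fun n => (hF.smooth n).continuous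
  have hcd : ∀ {g : ℂ → ℝ}, ContDiff ℝ (⊤ : ℕ∞) g → ∀ e, Continuous (fun z => fderiv ℝ g z e) := by
    intro g hg e
    have := hg.continuous_fderiv (by simp)
    fun_prop
  have hcdF : ∀ n, ∀ e, Continuous (fun z => fderiv ℝ (F n) z e) := by
    intro n e
    have := (hF.smooth n).continuous_fderiv (by simp)
    fun_prop
  have hbd : ∀ {g : ℂ → ℝ}, Continuous g → ∃ M, ∀ x ∈ A, |g x| ≤ M := by
    intro g hg
    obtain ⟨M, hM⟩ := (isCompact_closedBall (0:ℂ) R).exists_bound_of_continuousOn hg.continuousOn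
    exact ⟨M, fun x hx => hM x hx⟩
  have one_mem : MemLp (fun _ : ℂ => (1:ℂ)) 2 (volume.restrict A) := memLp_ball continuous_const R
  have hre : ∀ z : ℂ, ‖reCLM z‖ ≤ ‖z‖ := fun z => abs_re_le_norm z
  have him : ∀ z : ℂ, ‖imCLM z‖ ≤ ‖z‖ := fun z => abs_im_le_norm z
  have z0 : ∀ g : ℂ → ℂ, Tendsto (fun n : ℕ => eLpNorm (fun z => g z - g z) 2 (volume.restrict A))
      atTop (𝓝 0) := by intro g; simp
  have L0 : ∀ {c k : ℂ → ℝ} {q : ℂ → ℂ}, Continuous c → Continuous k →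
      MemLp q 2 (volume.restrict A) →
      Tendsto (fun n => ∫ z in A, c z * k (F n z) * reCLM (1:ℂ) * γ (q z)) atTop
      (𝓝 (∫ z in A, c z * k (f z) * reCLM (1:ℂ) * γ (q z))) := by
    intro c k q hc hk hq
    exact lim_main hf hA le_rfl (hF.unif R) hFc (fun _ => one_mem) (fun _ => hq) one_mem hq
      (z0 _) (z0 _) reCLM γ hre hγ hc hk
  have T1 := L0 (hcd hχ 1) hη.continuous hm2
  have T2 := L0 (hcd hχ I) hη.continuous hm1
  have LL : ∀ {e : ℂ} {p q : ℂ → ℂ} {k : ℂ → ℝ} (α : ℂ →L[ℝ] ℝ), (∀ z, ‖α z‖ ≤ ‖z‖) →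
      Tendsto (fun n => eLpNorm (fun x => fderiv ℝ (F n) x e - p x) 2
        (volume.restrict A)) atTop (𝓝 0) → MemLp p 2 (volume.restrict A) →
      MemLp q 2 (volume.restrict A) → Continuous k →
      Tendsto (fun n => ∫ z in A, χ z * k (F n z) * α (fderiv ℝ (F n) z e) * γ (q z)) atTop
      (𝓝 (∫ z in A, χ z * k (f z) * α (p z) * γ (q z))) := by
    intro e p q k α hα hp hpm hq hk
    exact lim_main hf hA le_rfl (hF.unif R) hFc (fun n => memLp_ball (hcdF n e) R) (fun _ => hq)
      hpm hq hp (z0 _) α γ hα hγ hχ.continuous hk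
  have T3 := LL reCLM hre (hF.L1 R) hm1 hm2 (hcd hη 1)
  have T4 := LL imCLM him (hF.L1 R) hm1 hm2 (hcd hη I)
  have T5 := LL reCLM hre (hF.L2 R) hm2 hm1 (hcd hη 1)
  have T6 := LL imCLM him (hF.L2 R) hm2 hm1 (hcd hη I)
  have T := (T1.sub T2).add ((T3.add T4).sub (T5.add T6))
  have hI0 : ∀ {c k : ℂ → ℝ} {G p q : ℂ → ℂ} (α : ℂ →L[ℝ] ℝ), Continuous c → Continuous k →
      Continuous G → MemLp p 2 (volume.restrict A) → MemLp q 2 (volume.restrict A) →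
      IntegrableOn (fun z => c z * k (G z) * α (p z) * γ (q z)) A := by
    intro c k G p q α hc hk hG hp hq
    have := hc.mul (hk.comp hG)
    exact int_mul3 hA this.aestronglyMeasurable (hbd this) (α.comp_memLp' hp) (γ.comp_memLp' hq)
  have comb : ∀ {G p1 p2 : ℂ → ℂ}, Continuous G → MemLp p1 2 (volume.restrict A) →
      MemLp p2 2 (volume.restrict A) →
      (∫ z in A, fderiv ℝ χ z 1 * η (G z) * reCLM (1:ℂ) * γ (g₂ z)) -
      (∫ z in A, fderiv ℝ χ z I * η (G z) * reCLM (1:ℂ) * γ (g₁ z)) +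
      ((∫ z in A, χ z * fderiv ℝ η (G z) 1 * reCLM (p1 z) * γ (g₂ z)) +
       (∫ z in A, χ z * fderiv ℝ η (G z) I * imCLM (p1 z) * γ (g₂ z)) -
       ((∫ z in A, χ z * fderiv ℝ η (G z) 1 * reCLM (p2 z) * γ (g₁ z)) +
       (∫ z in A, χ z * fderiv ℝ η (G z) I * imCLM (p2 z) * γ (g₁ z)))) =
      (∫ z in A, (fderiv ℝ χ z 1 * η (G z) * γ (g₂ z)
        - fderiv ℝ χ z I * η (G z) * γ (g₁ z) +
      χ z * (fderiv ℝ η (G z) (p1 z) * γ (g₂ z) - fderiv ℝ η (G z) (p2 z) * γ (g₁ z)))) := by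
    intro G p1 p2 hG h1 h2
    have i1 := hI0 reCLM (hcd hχ 1) hη.continuous hG one_mem hm2
    have i2 := hI0 reCLM (hcd hχ I) hη.continuous hG one_mem hm1
    have i3 := hI0 reCLM hχ.continuous (hcd hη 1) hG h1 hm2
    have i4 := hI0 imCLM hχ.continuous (hcd hη I) hG h1 hm2
    have i5 := hI0 reCLM hχ.continuous (hcd hη 1) hG h2 hm1
    have i6 := hI0 imCLM hχ.continuous (hcd hη I) hG h2 hm1
    have A1 := integral_sub i1 i2
    have A2 := integral_add i3 i4
    have A3 := integral_add i5 i6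
    have A4 := integral_sub (i3.add i4) (i5.add i6)
    have A5 := integral_add (i1.sub i2) ((i3.add i4).sub (i5.add i6))
    simp only [Pi.add_apply, Pi.sub_apply] at A4 A5
    rw [← A1, ← A2, ← A3, ← A4, ← A5]
    congr 1
    ext z
    rw [fderiv_split η (G z) (p1 z), fderiv_split η (G z) (p2 z)]
    simp only [reCLM_apply, imCLM_apply, one_re]
    ring
  rw [comb hf hm1 hm2] at T
  refine tendsto_nhds_unique T (tendsto_const_nhds.congr (fun n => ?_))
  rw [comb (hFc n) (memLp_ball (hcdF n 1) R) (memLp_ball (hcdF n I) R)]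
  set φ : ℂ → ℝ := fun z => χ z * η (F n z) with hφ
  have hφd : ContDiff ℝ (⊤ : ℕ∞) φ := hχ.mul (hη.comp (hF.smooth n))
  have hts : tsupport φ ⊆ tsupport χ := tsupport_mul_subset_left
  have hφc : HasCompactSupport φ :=
    HasCompactSupport.of_support_subset_isCompact (isCompact_closedBall (0:ℂ) R)
      ((subset_tsupport _).trans (hts.trans hχc))
  have hcl := closed_form hw hφd hφc
  have hfd : ∀ z e, fderiv ℝ φ z e = fderiv ℝ χ z e * η (F n z) +
      χ z * fderiv ℝ η (F n z) (fderiv ℝ (F n) z e) := by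
    intro z e
    have d1 := (hχ.differentiable (by simp) z).hasFDerivAt
    have d2 := (hη.differentiable (by simp) (F n z)).hasFDerivAt
    have d3 := ((hF.smooth n).differentiable (by simp) z).hasFDerivAt
    have d4 : HasFDerivAt φ _ z := d1.mul (d2.comp z d3)
    rw [d4.fderiv]
    simp; ring
  have hz : ∀ z, z ∉ A → ∀ e, fderiv ℝ φ z e = 0 := by
    intro z hz e
    have : z ∉ tsupport (fderiv ℝ φ) := fun h => hz (hχc (hts (tsupport_fderiv_subset ℝ h)))
    rw [image_eq_zero_of_notMem_tsupport this]; rfl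
  have hres : ∀ (g : ℂ → ℂ) (e : ℂ), ∫ z, g z * (fderiv ℝ φ z e : ℂ) = ∫ z in A, g z * (fderiv ℝ φ z e : ℂ) := by
    intro g e
    rw [setIntegral_eq_integral_of_forall_compl_eq_zero]
    intro z hzA
    rw [hz z hzA e]; simp
  rw [hres, hres] at hcl
  have hint : ∀ (g : ℂ → ℂ) (e : ℂ), MemLp g 2 (volume.restrict A) →
      IntegrableOn (fun z => g z * (fderiv ℝ φ z e : ℂ)) A := by
    intro g e hg
    have hc : Continuous (fun z => (fderiv ℝ φ z e : ℂ)) := continuous_ofReal.comp (hcd hφd e)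
    exact hg.integrable_mul (memLp_ball hc R)
  have hcl' := congrArg γ hcl
  rw [← ContinuousLinearMap.integral_comp_comm γ (hint g₂ 1 hm2),
    ← ContinuousLinearMap.integral_comp_comm γ (hint g₁ I hm1)] at hcl'
  have hγm : ∀ (w : ℂ) (t : ℝ), γ (w * (t:ℂ)) = t * γ w := by
    intro w t
    rw [mul_comm, ← real_smul, map_smul, smul_eq_mul]
  simp_rw [hγm] at hcl'
  have hi : ∀ (g : ℂ → ℂ) (e : ℂ), MemLp g 2 (volume.restrict A) →
      IntegrableOn (fun z => fderiv ℝ φ z e * γ (g z)) A := by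
    intro g e hg
    exact (memLp_ball (hcd hφd e) R).integrable_mul (γ.comp_memLp' hg)
  rw [← sub_eq_zero, ← integral_sub (hi g₂ 1 hm2) (hi g₁ I hm1)] at hcl'
  rw [← hcl']
  congr 1; ext z
  rw [hfd, hfd]; ring

lemma null_lagrangian {f g₁ g₂ : ℂ → ℂ} {F : ℕ → ℂ → ℂ} (Φ : ℂ ≃ₜ ℂ) (hΦ : ⇑Φ = f)
    (hw : HasWeakPartialsOn f g₁ g₂ Set.univ)
    (hF : Approx f g₁ g₂ F)
    (hm1 : ∀ R, MemLp g₁ 2 (volume.restrict (closedBall 0 R)))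
    (hm2 : ∀ R, MemLp g₂ 2 (volume.restrict (closedBall 0 R)))
    {η : ℂ → ℝ} (hη : ContDiff ℝ (⊤ : ℕ∞) η) (hc : HasCompactSupport η) (e : ℂ) :
    ∫ z, fderiv ℝ η (f z) e * Jac g₁ g₂ z = 0 := by
  have hf : Continuous f := hΦ ▸ Φ.continuous
  have hK : IsCompact (f ⁻¹' (tsupport η)) := by
    rw [← hΦ]
    exact Φ.isCompact_preimage.mpr hc
  obtain ⟨r, hr⟩ := hK.isBounded.subset_closedBall 0
  set R := |r| + 2 with hR
  have hrr := le_abs_self r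
  have hr0 := abs_nonneg r
  set χ : ContDiffBump (0:ℂ) := ⟨|r|+1, |r|+2, by positivity, by linarith⟩ with hχ
  have hχc : tsupport χ ⊆ closedBall 0 R := by
    rw [χ.tsupport_eq]
  have key : ∀ (γ : ℂ →L[ℝ] ℝ), (∀ z, ‖γ z‖ ≤ ‖z‖) → ∫ z, (fderiv ℝ η (f z) (g₁ z) * γ (g₂ z) -
      fderiv ℝ η (f z) (g₂ z) * γ (g₁ z)) = 0 := by
    intro γ hγ
    have h := null_aux hf hw hF (hm1 R) (hm2 R) hη (χ.contDiff (n := (⊤:ℕ∞))) hχc γ hγ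
    rw [← h, setIntegral_eq_integral_of_forall_compl_eq_zero]
    · congr 1; ext z
      by_cases hz : f z ∈ tsupport η
      · have hz2 : z ∈ ball (0:ℂ) (|r|+1) := by
          have := hr hz
          rw [mem_closedBall] at this
          rw [mem_ball]; linarith
        have h1 : χ z = 1 := χ.one_of_mem_closedBall (ball_subset_closedBall hz2)
        have h2 : fderiv ℝ χ z = 0 := by
          have : (χ : ℂ → ℝ) =ᶠ[𝓝 z] fun _ => 1 := by
            filter_upwards [isOpen_ball.mem_nhds hz2] with y hy
            exact χ.one_of_mem_closedBall (ball_subset_closedBall hy)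
          rw [this.fderiv_eq]; simp
        rw [h1, h2]; simp
      · have h1 : η (f z) = 0 := image_eq_zero_of_notMem_tsupport hz
        have h2 : fderiv ℝ η (f z) = 0 := by
          have : f z ∉ tsupport (fderiv ℝ η) := fun h => hz (tsupport_fderiv_subset ℝ h)
          exact image_eq_zero_of_notMem_tsupport this
        rw [h1, h2]; simp
    · intro z hz
      have hz1 : z ∉ tsupport χ := fun h => hz (hχc h)
      have h1 : χ z = 0 := image_eq_zero_of_notMem_tsupport hz1
      have h2 : fderiv ℝ χ z = 0 := by
        have : z ∉ tsupport (fderiv ℝ χ) := fun h => hz1 (tsupport_fderiv_subset ℝ h)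
        exact image_eq_zero_of_notMem_tsupport this
      rw [h1, h2]; simp
  have kim := key imCLM (fun z => abs_im_le_norm z)
  have kre := key reCLM (fun z => abs_re_le_norm z)
  have h1 : ∫ z, fderiv ℝ η (f z) 1 * Jac g₁ g₂ z = 0 := by
    rw [← kim]; congr 1; ext z
    rw [fderiv_split η (f z) (g₁ z), fderiv_split η (f z) (g₂ z)]
    simp only [imCLM_apply, Jac]; ring
  have h2 : ∫ z, fderiv ℝ η (f z) I * Jac g₁ g₂ z = 0 := by
    rw [← neg_eq_zero, ← integral_neg, ← kre]; congr 1; ext z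
    rw [fderiv_split η (f z) (g₁ z), fderiv_split η (f z) (g₂ z)]
    simp only [reCLM_apply, Jac]; ring
  have hJ : ∀ R, IntegrableOn (Jac g₁ g₂) (closedBall 0 R) := by
    intro R
    have a := (reCLM.comp_memLp' (hm1 R)).integrable_mul (imCLM.comp_memLp' (hm2 R))
    have b := (imCLM.comp_memLp' (hm1 R)).integrable_mul (reCLM.comp_memLp' (hm2 R))
    exact a.sub b
  have hint : ∀ e, Integrable (fun z => fderiv ℝ η (f z) e * Jac g₁ g₂ z) := by
    intro e
    have hc2 : Continuous (fun z => fderiv ℝ η (f z) e) := by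
      have := hη.continuous_fderiv (by simp)
      fun_prop
    have : IntegrableOn (fun z => fderiv ℝ η (f z) e * Jac g₁ g₂ z) (closedBall 0 r) := by
      exact (hJ r).continuousOn_mul hc2.continuousOn (isCompact_closedBall _ _)
    rw [← integrableOn_iff_integrable_of_support_subset (s := closedBall 0 r)]
    · exact this
    · intro z hz
      apply hr
      by_contra hcon
      have : f z ∉ tsupport (fderiv ℝ η) := fun h => hcon (tsupport_fderiv_subset ℝ h)
      apply hz
      simp only
      rw [image_eq_zero_of_notMem_tsupport this]; simp
  have e1 : ∀ z, fderiv ℝ η (f z) e * Jac g₁ g₂ z = e.re * (fderiv ℝ η (f z) 1 * Jac g₁ g₂ z) +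
      e.im * (fderiv ℝ η (f z) I * Jac g₁ g₂ z) := by
    intro z
    rw [fderiv_split η (f z) e]; ring
  simp_rw [e1]
  rw [integral_add ((hint 1).const_mul _) ((hint I).const_mul _), integral_const_mul,
    integral_const_mul, h1, h2]
  simp

end QC

namespace QC
open Complex Metric MeasureTheory Filter Topology Set
open scoped ENNReal NNReal



lemma ext_smooth {μ ν : Measure ℂ} [IsFiniteMeasureOnCompacts μ] [IsFiniteMeasureOnCompacts ν]
    (h : ∀ η : ℂ → ℝ, ContDiff ℝ (⊤ : ℕ∞) η → HasCompactSupport η → ∫ w, η w ∂μ = ∫ w, η w ∂ν) :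
    μ = ν := by
  have hb : ∀ U : Set ℂ, IsOpen U → Bornology.IsBounded U → μ U = ν U := by
    intro U hU hUb
    obtain ⟨g, hgs, hgc, hgr⟩ := hU.exists_contDiff_support_eq (n := ⊤)
    have hg0 : ∀ x, 0 ≤ g x := fun x => (hgr ⟨x, rfl⟩).1
    have hcl : IsCompact (closure U) := hUb.isCompact_closure
    have key : ∀ (m : Measure ℂ), IsFiniteMeasureOnCompacts m →
        Tendsto (fun n : ℕ => ∫ w, Real.smoothTransition (n * g w) ∂m) atTop (𝓝 (m.real U)) := by
      intro m hm
      have hU1 : ∫ w, U.indicator (fun _ => (1:ℝ)) w ∂m = m.real U := by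
        rw [integral_indicator hU.measurableSet]; simp
      rw [← hU1]
      refine tendsto_integral_of_dominated_convergence (U.indicator (fun _ => (1:ℝ))) ?_ ?_ ?_ ?_
      · intro n
        apply Continuous.aestronglyMeasurable
        exact Real.smoothTransition.continuous.comp (continuous_const.mul hgc.continuous)
      · rw [integrable_indicator_iff hU.measurableSet]
        refine integrableOn_const ?_ enorm_ne_top
        exact ((measure_mono subset_closure).trans_lt hcl.measure_lt_top).ne
      · intro n
        refine Eventually.of_forall fun w => ?_
        rw [Real.norm_of_nonneg (Real.smoothTransition.nonneg _)]
        by_cases hw : w ∈ U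
        · rw [indicator_of_mem hw]; exact Real.smoothTransition.le_one _
        · rw [indicator_of_notMem hw]
          have : g w = 0 := by rw [← hgs] at hw; simpa using hw
          rw [this]; simp
      · refine Eventually.of_forall fun w => ?_
        by_cases hw : w ∈ U
        · rw [indicator_of_mem hw]
          have hpos : 0 < g w := by
            rw [← hgs] at hw
            exact lt_of_le_of_ne (hg0 w) (Ne.symm hw)
          obtain ⟨N, hN⟩ := exists_nat_ge (1 / g w)
          refine tendsto_const_nhds.congr' ?_
          filter_upwards [eventually_ge_atTop N] with n hn
          symm
          apply Real.smoothTransition.one_of_one_le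
          have : 1 / g w ≤ n := hN.trans (by exact_mod_cast hn)
          rwa [div_le_iff₀ hpos] at this
        · rw [indicator_of_notMem hw]
          have : g w = 0 := by rw [← hgs] at hw; simpa using hw
          simp [this]
    have h1 := key μ inferInstance
    have h2 := key ν inferInstance
    have : ∀ n : ℕ, ∫ w, Real.smoothTransition (n * g w) ∂μ = ∫ w, Real.smoothTransition (n * g w) ∂ν := by
      intro n
      apply h
      · exact Real.smoothTransition.contDiff.comp (contDiff_const.mul hgc)
      · refine HasCompactSupport.of_support_subset_isCompact hcl ?_
        intro w hw
        apply subset_closure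
        rw [← hgs]
        intro h0
        apply hw
        simp only
        rw [h0]; simp
    simp_rw [this] at h1
    have e := tendsto_nhds_unique h1 h2
    rw [Measure.real, Measure.real, ENNReal.toReal_eq_toReal_iff'] at e
    · exact e
    · exact ((measure_mono subset_closure).trans_lt hcl.measure_lt_top).ne
    · exact ((measure_mono subset_closure).trans_lt hcl.measure_lt_top).ne
  refine Measure.ext_of_generateFrom_of_iUnion {s | IsOpen s} (fun n : ℕ => ball (0:ℂ) n)
    (BorelSpace.measurable_eq) isPiSystem_isOpen (iUnion_ball_nat 0) (fun n => show IsOpen (ball (0:ℂ) n) from isOpen_ball)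
    (fun n => measure_ball_lt_top.ne) ?_
  intro s hs
  have hu : s = ⋃ n : ℕ, s ∩ ball (0:ℂ) n := by
    rw [← inter_iUnion, iUnion_ball_nat, inter_univ]
  have hmono : Monotone (fun n : ℕ => s ∩ ball (0:ℂ) n) := by
    intro m n hmn
    exact inter_subset_inter_right _ (ball_subset_ball (by exact_mod_cast hmn))
  have t1 := tendsto_measure_iUnion_atTop (μ := μ) hmono
  have t2 := tendsto_measure_iUnion_atTop (μ := ν) hmono
  rw [← hu] at t1 t2
  refine tendsto_nhds_unique t1 (t2.congr fun n => ?_)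
  exact (hb _ (IsOpen.inter hs isOpen_ball) (isBounded_ball.subset inter_subset_right)).symm

lemma trans_inv {ν : Measure ℂ} [IsFiniteMeasureOnCompacts ν]
    (h : ∀ η : ℂ → ℝ, ContDiff ℝ (⊤ : ℕ∞) η → HasCompactSupport η → ∀ e, ∫ w, fderiv ℝ η w e ∂ν = 0) :
    ∃ c : ℝ≥0, ν = c • (volume : Measure ℂ) := by
  have hinv : ν.IsAddLeftInvariant := by
    constructor
    intro a
    have hma : Measurable (fun x : ℂ => a + x) := by fun_prop
    have hfin : IsFiniteMeasureOnCompacts (Measure.map (fun x => a + x) ν) := by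
      constructor
      intro K hK
      rw [Measure.map_apply hma hK.measurableSet]
      exact ((Homeomorph.addLeft a).isCompact_preimage.mpr hK).measure_lt_top
    apply ext_smooth
    intro η hη hc
    rw [integral_map hma.aemeasurable hη.continuous.aestronglyMeasurable]
    have hηt : ∀ t : ℝ, ContDiff ℝ (⊤ : ℕ∞) (fun w => η (t • a + w)) := fun t =>
      hη.comp (contDiff_const.add contDiff_id)
    have hct : ∀ t : ℝ, HasCompactSupport (fun w => η (t • a + w)) := fun t =>
      hc.comp_homeomorph (Homeomorph.addLeft (t • a))
    have hfd : ∀ (t : ℝ) w, fderiv ℝ (fun w => η (t • a + w)) w = fderiv ℝ η (t • a + w) := by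
      intro t w
      rw [fderiv_comp_add_left]
    have hder : ∀ t : ℝ, HasDerivAt (fun t : ℝ => ∫ w, η (t • a + w) ∂ν) 0 t := by
      intro t
      obtain ⟨r, hr⟩ := hc.isBounded.subset_closedBall 0
      have hcont : Continuous (fderiv ℝ η) := hη.continuous_fderiv (by simp)
      obtain ⟨M, hM⟩ : ∃ M, ∀ x, ‖fderiv ℝ η x‖ ≤ M :=
        (hc.fderiv ℝ).exists_bound_of_continuous hcont
      set R := r + (|t| + 1) * ‖a‖
      have := hasDerivAt_integral_of_dominated_loc_of_deriv_le (μ := ν) (x₀ := t) (s := ball t 1)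
        (F := fun (t : ℝ) w => η (t • a + w)) (F' := fun (t : ℝ) w => fderiv ℝ η (t • a + w) a)
        (bound := (closedBall (0:ℂ) R).indicator (fun _ => M * ‖a‖)) (ball_mem_nhds t one_pos)
        (Eventually.of_forall fun s => (hηt s).continuous.aestronglyMeasurable)
        ((hηt t).continuous.integrable_of_hasCompactSupport (hct t))
        (by apply Continuous.aestronglyMeasurable; fun_prop) ?_ ?_ ?_
      · have h2 := this.2
        simp_rw [← hfd] at h2
        rwa [h _ (hηt t) (hct t) a] at h2
      · refine Eventually.of_forall fun w s hs => ?_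
        by_cases hw : w ∈ closedBall (0:ℂ) R
        · rw [indicator_of_mem hw]
          exact ((fderiv ℝ η (s • a + w)).le_opNorm a).trans
            (mul_le_mul_of_nonneg_right (hM _) (norm_nonneg _))
        · rw [indicator_of_notMem hw]
          have : s • a + w ∉ tsupport (fderiv ℝ η) := by
            intro hmem
            apply hw
            have h1 := hr (tsupport_fderiv_subset ℝ hmem)
            rw [mem_closedBall_zero_iff] at h1 ⊢
            have h2 : ‖w‖ ≤ ‖s • a + w‖ + ‖s • a‖ := by
              have := norm_sub_le (s • a + w) (s • a)
              simpa using this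
            have h3 : ‖s • a‖ ≤ (|t| + 1) * ‖a‖ := by
              rw [norm_smul]
              apply mul_le_mul_of_nonneg_right _ (norm_nonneg _)
              rw [Real.norm_eq_abs]
              rw [mem_ball, Real.dist_eq] at hs
              have := abs_sub_abs_le_abs_sub s t
              linarith
            linarith
          rw [image_eq_zero_of_notMem_tsupport this]; simp
      · rw [integrable_indicator_iff measurableSet_closedBall]
        refine integrableOn_const ?_ enorm_ne_top
        exact measure_closedBall_lt_top.ne
      · refine Eventually.of_forall fun w s hs => ?_
        have d1 := (hη.differentiable (by simp) (s • a + w)).hasFDerivAt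
        have d2 : HasDerivAt (fun s : ℝ => s • a + w) a s := by
          simpa using ((hasDerivAt_id s).smul_const a).add_const w
        exact d1.comp_hasDerivAt s d2
    have hconst := is_const_of_deriv_eq_zero (fun t => (hder t).differentiableAt)
      (fun t => (hder t).deriv) 1 0
    simpa using hconst
  exact ⟨_, Measure.isAddLeftInvariant_eq_smul ν volume⟩

lemma beltrami_alg {a b m : ℂ} {k : ℝ} (hk : k < 1) (hm : ‖m‖ ≤ k)
    (h : (a + I * b) / 2 = m * ((a - I * b) / 2)) :
    0 ≤ a.re * b.im - a.im * b.re ∧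
    ‖a‖ ^ 2 + ‖b‖ ^ 2 ≤ 4 / (1 - k) * (a.re * b.im - a.im * b.re) := by
  have hk0 : 0 ≤ k := (norm_nonneg _).trans hm
  have h2 := congrArg normSq h
  rw [normSq_mul] at h2
  have hm2 : normSq m ≤ k ^ 2 := by
    rw [normSq_eq_norm_sq]; gcongr
  rw [← normSq_eq_norm_sq, ← normSq_eq_norm_sq]
  set P := normSq ((a - I * b) / 2) with hP
  have hP0 : 0 ≤ P := normSq_nonneg _
  have eP : 4 * P = (a.re + b.im)^2 + (a.im - b.re)^2 := by
    rw [hP, normSq_div]; simp [normSq_apply]; ring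
  have eQ : 4 * normSq ((a + I * b) / 2) = (a.re - b.im)^2 + (a.im + b.re)^2 := by
    rw [normSq_div]; simp [normSq_apply]; ring
  set Q := normSq ((a + I * b) / 2)
  have hQ : Q ≤ k ^ 2 * P := by rw [h2]; gcongr
  have hQ2 : Q ≤ k * P := hQ.trans (by gcongr; nlinarith)
  rw [normSq_apply, normSq_apply]
  have hJ : a.re * b.im - a.im * b.re = P - Q := by nlinarith
  have hS : a.re * a.re + a.im * a.im + (b.re * b.re + b.im * b.im) = 2 * (P + Q) := by nlinarith
  rw [hJ, hS]
  have : (1 - k) * P ≤ P - Q := by linarith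
  have hk1 : 0 < 1 - k := by linarith
  constructor
  · have := mul_nonneg hk1.le hP0
    linarith
  · rw [div_mul_eq_mul_div, le_div_iff₀ hk1]
    nlinarith

end QC

namespace QC
open Complex Metric MeasureTheory Filter Topology Set
open scoped ENNReal NNReal



lemma fderiv_norm_sq_le (L : ℂ →L[ℝ] ℂ) : ‖L‖ ^ 2 ≤ ‖L 1‖ ^ 2 + ‖L I‖ ^ 2 := by
  have : ‖L‖ ≤ Real.sqrt (‖L 1‖ ^ 2 + ‖L I‖ ^ 2) := by
    refine L.opNorm_le_bound (Real.sqrt_nonneg _) fun z => ?_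
    have hz : L z = z.re • L 1 + z.im • L I := by
      conv_lhs => rw [show z = z.re • (1:ℂ) + z.im • I by simp [Complex.re_add_im]]
      rw [map_add, map_smul, map_smul]
    have h1 : ‖L z‖ ≤ |z.re| * ‖L 1‖ + |z.im| * ‖L I‖ := by
      rw [hz]
      refine (norm_add_le _ _).trans ?_
      rw [norm_smul, norm_smul]; rfl
    refine h1.trans (abs_le_of_sq_le_sq' ?_ (by positivity)).2
    rw [mul_pow, Real.sq_sqrt (by positivity), ← normSq_eq_norm_sq z, normSq_apply]
    have e1 := abs_mul_abs_self z.re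
    have e2 := abs_mul_abs_self z.im
    rw [← e1, ← e2]
    nlinarith [sq_nonneg (|z.re| * ‖L I‖ - |z.im| * ‖L 1‖)]
  calc ‖L‖ ^ 2 ≤ (Real.sqrt (‖L 1‖ ^ 2 + ‖L I‖ ^ 2)) ^ 2 := by gcongr
    _ = _ := Real.sq_sqrt (by positivity)

lemma measure_identity {f g₁ g₂ : ℂ → ℂ} {F : ℕ → ℂ → ℂ} (Φ : ℂ ≃ₜ ℂ) (hΦ : ⇑Φ = f)
    (hw : HasWeakPartialsOn f g₁ g₂ Set.univ)
    (hF : Approx f g₁ g₂ F)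
    (hm1 : ∀ R, MemLp g₁ 2 (volume.restrict (closedBall 0 R)))
    (hm2 : ∀ R, MemLp g₂ 2 (volume.restrict (closedBall 0 R)))
    (hJ0 : ∀ᵐ z, 0 ≤ Jac g₁ g₂ z) :
    ∃ c : ℝ≥0, ∀ (A : Set ℂ), MeasurableSet A → ∀ h : ℂ → ℝ,
      ∫ z in A, Jac g₁ g₂ z * h (f z) = c * ∫ w in f '' A, h w := by
  have hJi : ∀ R, IntegrableOn (Jac g₁ g₂) (closedBall 0 R) := by
    intro R
    have a := (reCLM.comp_memLp' (hm1 R)).integrable_mul (imCLM.comp_memLp' (hm2 R))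
    have b := (imCLM.comp_memLp' (hm1 R)).integrable_mul (reCLM.comp_memLp' (hm2 R))
    exact a.sub b
  have hJm : AEMeasurable (Jac g₁ g₂) := by
    have : AEMeasurable (Jac g₁ g₂) (volume.restrict (⋃ n : ℕ, closedBall (0:ℂ) n)) :=
      (aemeasurable_iUnion_iff).mpr fun n => (hJi n).1.aemeasurable
    rwa [iUnion_closedBall_nat, Measure.restrict_univ] at this
  have hme : MeasurableEmbedding f := hΦ ▸ Φ.measurableEmbedding
  set m := (volume : Measure ℂ).withDensity (fun z => ENNReal.ofReal (Jac g₁ g₂ z)) with hm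
  have hfin : IsFiniteMeasureOnCompacts (m.map f) := by
    constructor
    intro K hK
    rw [hme.map_apply]
    have hK' : IsCompact (f ⁻¹' K) := by rw [← hΦ]; exact Φ.isCompact_preimage.mpr hK
    obtain ⟨r, hr⟩ := hK'.isBounded.subset_closedBall 0
    refine (measure_mono hr).trans_lt ?_
    rw [hm, withDensity_apply _ measurableSet_closedBall]
    exact (hJi r).lintegral_lt_top
  have hset : ∀ (A : Set ℂ), MeasurableSet A → ∀ h : ℂ → ℝ,
      ∫ z in A, Jac g₁ g₂ z * h (f z) = ∫ w in f '' A, h w ∂(m.map f) := by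
    intro A hA h
    rw [hme.setIntegral_map, hme.injective.preimage_image, hm,
      setIntegral_withDensity_eq_setIntegral_toReal_smul₀ hJm.ennreal_ofReal.restrict (by simp) _ hA]
    refine integral_congr_ae ?_
    filter_upwards [ae_restrict_of_ae hJ0] with z hz
    rw [ENNReal.toReal_ofReal hz, smul_eq_mul]
  obtain ⟨c, hc⟩ := trans_inv (ν := m.map f) (by
    intro η hη hcs e
    have h1 := hset univ MeasurableSet.univ (fun w => fderiv ℝ η w e)
    have h2 : f '' univ = univ := by rw [← hΦ]; simp
    rw [h2] at h1
    simp only [Measure.restrict_univ] at h1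
    rw [← h1, ← null_lagrangian Φ hΦ hw hF hm1 hm2 hη hcs e]
    congr 1; ext z; ring)
  refine ⟨c, fun A hA h => ?_⟩
  rw [hset A hA h, hc, Measure.restrict_smul, integral_smul_nnreal_measure]
  rfl

/-- the analytic content of quasiconformality that will be used -/
structure QCData (f : ℂ → ℂ) (F : ℕ → ℂ → ℂ) (C : ℝ) : Prop where
  nonneg : 0 ≤ C
  smooth : ∀ n, ContDiff ℝ (⊤ : ℕ∞) (F n)
  unif : ∀ R, TendstoUniformlyOn F f atTop (closedBall 0 R)
  energy : ∀ (A : Set ℂ), MeasurableSet A → Bornology.IsBounded A → ∀ h : ℂ → ℝ, Continuous h →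
    ∀ ε : ℝ, 0 < ε → ∀ᶠ n in atTop,
      ∫ z in A, h (F n z) ^ 2 * ‖fderiv ℝ (F n) z‖ ^ 2 ≤ C * (∫ w in f '' A, h w ^ 2) + ε

lemma exists_data {f : ℂ → ℂ} (hqc : IsQCOfPlane f) : ∃ F C, QCData f F C := by
  obtain ⟨⟨Φ, hΦ⟩, g₁, g₂, hw, h2, μ, hμ, ⟨k, hk1, hk⟩, hbel⟩ := hqc
  have hf : Continuous f := hΦ ▸ Φ.continuous
  obtain ⟨F, hF⟩ := exists_approx hf hw h2
  have hli1 : LocallyIntegrable g₁ := locallyIntegrableOn_univ.mp hw.2.1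
  have hli2 : LocallyIntegrable g₂ := locallyIntegrableOn_univ.mp hw.2.2.1
  have hm1 : ∀ R, MemLp g₁ 2 (volume.restrict (closedBall 0 R)) := fun R =>
    (memLp_two_iff_integrable_sq_norm hli1.aestronglyMeasurable.restrict).mpr
      (h2 _ (isCompact_closedBall _ _)).1
  have hm2 : ∀ R, MemLp g₂ 2 (volume.restrict (closedBall 0 R)) := fun R =>
    (memLp_two_iff_integrable_sq_norm hli2.aestronglyMeasurable.restrict).mpr
      (h2 _ (isCompact_closedBall _ _)).2
  have hJ : ∀ᵐ z, 0 ≤ Jac g₁ g₂ z ∧ ‖g₁ z‖ ^ 2 + ‖g₂ z‖ ^ 2 ≤ 4 / (1 - k) * Jac g₁ g₂ z := by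
    filter_upwards [hk, hbel] with z h1 h2
    exact beltrami_alg hk1 h1 h2
  obtain ⟨c, hc⟩ := measure_identity Φ hΦ hw hF hm1 hm2 (hJ.mono fun z hz => hz.1)
  have hK : 0 ≤ 4 / (1 - k) := by
    apply div_nonneg <;> linarith
  refine ⟨F, 4 / (1 - k) * c, by positivity, hF.smooth, hF.unif, ?_⟩
  intro A hA hAb h hh ε hε
  obtain ⟨R, hR⟩ := hAb.subset_closedBall 0
  have hFc : ∀ n, Continuous (F n) := fun n => (hF.smooth n).continuous
  have hcdF : ∀ n, ∀ e, Continuous (fun z => fderiv ℝ (F n) z e) := by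
    intro n e
    have := (hF.smooth n).continuous_fderiv (by simp)
    fun_prop
  have hre : ∀ z : ℂ, ‖reCLM z‖ ≤ ‖z‖ := fun z => abs_re_le_norm z
  have him : ∀ z : ℂ, ‖imCLM z‖ ≤ ‖z‖ := fun z => abs_im_le_norm z
  have hh2 : Continuous (fun w => h w ^ 2) := hh.pow 2
  have LL : ∀ {e : ℂ} {p : ℂ → ℂ} (α : ℂ →L[ℝ] ℝ), (∀ z, ‖α z‖ ≤ ‖z‖) →
      Tendsto (fun n => eLpNorm (fun x => fderiv ℝ (F n) x e - p x) 2
        (volume.restrict (closedBall 0 R))) atTop (𝓝 0) → MemLp p 2 (volume.restrict (closedBall 0 R)) →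
      Tendsto (fun n => ∫ z in A, 1 * h (F n z) ^ 2 * α (fderiv ℝ (F n) z e) * α (fderiv ℝ (F n) z e)) atTop
      (𝓝 (∫ z in A, 1 * h (f z) ^ 2 * α (p z) * α (p z))) := by
    intro e p α hα hp hpm
    exact lim_main hf hA hR (hF.unif R) hFc (fun n => memLp_ball (hcdF n e) R)
      (fun n => memLp_ball (hcdF n e) R)
      hpm hpm hp hp α α hα hα (continuous_const (y := (1:ℝ))) hh2
  have T1 := LL reCLM hre (hF.L1 R) (hm1 R)
  have T2 := LL imCLM him (hF.L1 R) (hm1 R)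
  have T3 := LL reCLM hre (hF.L2 R) (hm2 R)
  have T4 := LL imCLM him (hF.L2 R) (hm2 R)
  have T := (T1.add T2).add (T3.add T4)
  have comb : ∀ {G p1 p2 : ℂ → ℂ}, Continuous G → MemLp p1 2 (volume.restrict (closedBall 0 R)) →
      MemLp p2 2 (volume.restrict (closedBall 0 R)) →
      IntegrableOn (fun z => h (G z) ^ 2 * (‖p1 z‖ ^ 2 + ‖p2 z‖ ^ 2)) A ∧
      (∫ z in A, 1 * h (G z) ^ 2 * reCLM (p1 z) * reCLM (p1 z)) +
      (∫ z in A, 1 * h (G z) ^ 2 * imCLM (p1 z) * imCLM (p1 z)) +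
      ((∫ z in A, 1 * h (G z) ^ 2 * reCLM (p2 z) * reCLM (p2 z)) +
      (∫ z in A, 1 * h (G z) ^ 2 * imCLM (p2 z) * imCLM (p2 z))) =
      ∫ z in A, h (G z) ^ 2 * (‖p1 z‖ ^ 2 + ‖p2 z‖ ^ 2) := by
    intro G p1 p2 hG h1 h2
    have hI0 : ∀ {p : ℂ → ℂ} (α : ℂ →L[ℝ] ℝ), MemLp p 2 (volume.restrict (closedBall 0 R)) →
        IntegrableOn (fun z => 1 * h (G z) ^ 2 * α (p z) * α (p z)) A := by
      intro p α hp
      have hcc : Continuous (fun z => 1 * h (G z) ^ 2) := by fun_prop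
      refine IntegrableOn.mono_set ?_ hR
      refine int_mul3 measurableSet_closedBall hcc.aestronglyMeasurable ?_ (α.comp_memLp' hp) (α.comp_memLp' hp)
      obtain ⟨M, hM⟩ := (isCompact_closedBall (0:ℂ) R).exists_bound_of_continuousOn hcc.continuousOn
      exact ⟨M, fun x hx => hM x hx⟩
    have i1 := hI0 reCLM h1
    have i2 := hI0 imCLM h1
    have i3 := hI0 reCLM h2
    have i4 := hI0 imCLM h2
    have A1 := integral_add i1 i2
    have A2 := integral_add i3 i4
    have A3 := integral_add (i1.add i2) (i3.add i4)
    simp only [Pi.add_apply] at A3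
    have i5 := (i1.add i2).add (i3.add i4)
    have heq : (fun z => 1 * h (G z) ^ 2 * reCLM (p1 z) * reCLM (p1 z) +
      1 * h (G z) ^ 2 * imCLM (p1 z) * imCLM (p1 z) + (1 * h (G z) ^ 2 * reCLM (p2 z) * reCLM (p2 z) +
      1 * h (G z) ^ 2 * imCLM (p2 z) * imCLM (p2 z))) =
      fun z => h (G z) ^ 2 * (‖p1 z‖ ^ 2 + ‖p2 z‖ ^ 2) := by
      ext z
      rw [← normSq_eq_norm_sq, ← normSq_eq_norm_sq, normSq_apply, normSq_apply]
      simp only [reCLM_apply, imCLM_apply]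
      ring
    constructor
    · rw [← heq]; exact i5
    · rw [← A1, ← A2, ← A3, heq]
  have hlim := (comb hf (hm1 R) (hm2 R)).2
  rw [hlim] at T
  have hle : ∫ z in A, h (f z) ^ 2 * (‖g₁ z‖ ^ 2 + ‖g₂ z‖ ^ 2) ≤
      4 / (1 - k) * c * ∫ w in f '' A, h w ^ 2 := by
    rw [mul_assoc, ← hc A hA (fun w => h w ^ 2), ← integral_const_mul]
    refine integral_mono_ae (comb hf (hm1 R) (hm2 R)).1 ?_ ?_
    · apply Integrable.const_mul
      refine IntegrableOn.mono_set ?_ hR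
      have a := (reCLM.comp_memLp' (hm1 R)).integrable_mul (imCLM.comp_memLp' (hm2 R))
      have b := (imCLM.comp_memLp' (hm1 R)).integrable_mul (reCLM.comp_memLp' (hm2 R))
      have hJi : IntegrableOn (Jac g₁ g₂) (closedBall 0 R) := a.sub b
      exact hJi.mul_continuousOn (hh2.comp hf).continuousOn (isCompact_closedBall _ _)
    · filter_upwards [ae_restrict_of_ae hJ] with z hz
      have := mul_le_mul_of_nonneg_left hz.2 (sq_nonneg (h (f z)))
      linarith
  have hev := T.eventually_lt_const (u := 4 / (1 - k) * c * (∫ w in f '' A, h w ^ 2) + ε) (by linarith)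
  filter_upwards [hev] with n hn
  have hcn := comb (hFc n) (memLp_ball (hcdF n 1) R) (memLp_ball (hcdF n I) R)
  rw [hcn.2] at hn
  refine le_trans (integral_mono_of_nonneg (Eventually.of_forall fun z => by positivity) hcn.1
    (Eventually.of_forall fun z => ?_)) hn.le
  exact mul_le_mul_of_nonneg_left (fderiv_norm_sq_le _) (sq_nonneg _)

end QC

namespace QC
open Complex Metric MeasureTheory Filter Topology Set
open scoped ENNReal NNReal



/-- polar parametrisation -/
noncomputable def pp (ξ u : ℂ) (r θ : ℝ) : ℂ := ξ + u * (r * cexp (θ * I))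

lemma pp_dist (ξ u : ℂ) (hu : ‖u‖ = 1) {r : ℝ} (hr : 0 ≤ r) (θ : ℝ) : dist (pp ξ u r θ) ξ = r := by
  rw [dist_eq_norm, pp, add_sub_cancel_left, norm_mul, norm_mul, hu, norm_exp_ofReal_mul_I]
  simp [abs_of_nonneg hr]

lemma pp_cont (ξ u : ℂ) : Continuous (fun p : ℝ × ℝ => pp ξ u p.1 p.2) := by
  unfold pp; fun_prop

lemma pp_surj (ξ : ℂ) {r : ℝ} {p : ℂ} (hp : p ∈ sphere ξ r) :
    ∃ θ ∈ Icc (-Real.pi) Real.pi, p = pp ξ 1 r θ := by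
  refine ⟨arg (p - ξ), ⟨(neg_pi_lt_arg _).le, arg_le_pi _⟩, ?_⟩
  have : ‖p - ξ‖ = r := by rwa [mem_sphere, dist_eq_norm] at hp
  rw [pp, one_mul, ← this, norm_mul_exp_arg_mul_I]; ring

variable {E : Type*} [NormedAddCommGroup E] [NormedSpace ℝ E]

lemma lintegral_pp (ξ u : ℂ) (hu : ‖u‖ = 1) (f : ℂ → ℝ≥0∞) (hf : Measurable f) :
    ∫⁻ p in Ioi (0:ℝ) ×ˢ Ioo (-Real.pi) Real.pi, ENNReal.ofReal p.1 * f (pp ξ u p.1 p.2) = ∫⁻ z, f z := by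
  have h1 : ∫⁻ z, f z = ∫⁻ z, f (ξ + u * z) := by
    have hmp : MeasurePreserving (fun z : ℂ => u * z) volume volume := by
      have hc : (Circle.exp (arg u) : ℂ) = u := by
        rw [Circle.coe_exp]
        have := norm_mul_exp_arg_mul_I u
        rwa [hu, ofReal_one, one_mul] at this
      have := (rotation (Circle.exp (arg u))).measurePreserving
      have heq : (fun z : ℂ => u * z) = ⇑(rotation (Circle.exp (arg u))) := by
        ext z; rw [rotation_apply, hc]
      rw [heq]; exact this
    have hmp2 : MeasurePreserving (fun z : ℂ => ξ + z) volume volume :=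
      measurePreserving_add_left volume ξ
    exact ((hmp2.comp hmp).lintegral_comp hf).symm
  rw [h1, ← Complex.lintegral_comp_polarCoord_symm]
  refine setLIntegral_congr_fun (measurableSet_Ioi.prod measurableSet_Ioo) fun p hp => ?_
  simp only [smul_eq_mul, Complex.polarCoord_symm_apply, pp]
  rw [exp_mul_I]
  simp

lemma polar_ge (v : ℂ → ℝ≥0∞) (hv : Measurable v) (ξ u : ℂ) (hu : ‖u‖ = 1) {a b α β : ℝ} (ha : 0 ≤ a)
    (hα : -Real.pi ≤ α) (hβ : β ≤ Real.pi) {S : Set ℂ} (hS : MeasurableSet S)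
    (hsub : ∀ r ∈ Ioo a b, ∀ θ ∈ Ioo α β, pp ξ u r θ ∈ S) :
    ∫⁻ p in Ioo a b ×ˢ Ioo α β, ENNReal.ofReal p.1 * v (pp ξ u p.1 p.2) ^ 2 ≤ ∫⁻ z in S, v z ^ 2 := by
  rw [← lintegral_indicator hS, ← lintegral_pp ξ u hu _ ((hv.pow_const 2).indicator hS)]
  refine le_trans (setLIntegral_mono' (measurableSet_Ioo.prod measurableSet_Ioo) fun p hp => ?_)
    (lintegral_mono_set (prod_mono (fun x hx => lt_of_le_of_lt ha hx.1)
      (Ioo_subset_Ioo hα hβ)))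
  rw [indicator_of_mem (hsub _ hp.1 _ hp.2)]

lemma pp_hasDeriv_th (ξ u : ℂ) (r θ : ℝ) :
    HasDerivAt (fun θ : ℝ => pp ξ u r θ) (u * (r * (cexp (θ * I) * I))) θ := by
  unfold pp
  have h : HasDerivAt (fun θ : ℝ => cexp (θ * I)) (cexp (θ * I) * I) θ := by
    have := ((hasDerivAt_id (θ:ℂ)).mul_const I).cexp.comp_ofReal
    simpa using this
  exact ((h.const_mul _).const_mul _).const_add _

lemma pp_hasDeriv_r (ξ u : ℂ) (r θ : ℝ) :
    HasDerivAt (fun r : ℝ => pp ξ u r θ) (u * (cexp (θ * I))) r := by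
  unfold pp
  have h : HasDerivAt (fun r : ℝ => (r:ℂ) * cexp (θ * I)) (cexp (θ * I)) r := by
    have := ((hasDerivAt_id (r:ℂ)).mul_const (cexp (θ * I))).comp_ofReal
    simpa using this
  exact (h.const_mul _).const_add _

lemma pp_contDiff_th (ξ u : ℂ) (r : ℝ) : ContDiff ℝ 1 (fun θ : ℝ => pp ξ u r θ) := by
  unfold pp
  have : ContDiff ℝ 1 (fun θ : ℝ => (θ : ℂ)) := ofRealCLM.contDiff
  fun_prop

lemma pp_contDiff_r (ξ u : ℂ) (θ : ℝ) : ContDiff ℝ 1 (fun r : ℝ => pp ξ u r θ) := by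
  unfold pp
  have : ContDiff ℝ 1 (fun θ : ℝ => (θ : ℂ)) := ofRealCLM.contDiff
  fun_prop

lemma circle_ftc {v : ℂ → E} (hv : ContDiff ℝ 1 v) (ξ u : ℂ) (hu : ‖u‖ = 1) {r : ℝ} (hr : 0 ≤ r)
    {θ₁ θ₂ α β : ℝ} (h1 : θ₁ ∈ Icc α β) (h2 : θ₂ ∈ Icc α β) :
    ‖v (pp ξ u r θ₁) - v (pp ξ u r θ₂)‖ₑ ≤
      ∫⁻ θ in Ioo α β, ENNReal.ofReal r * ‖fderiv ℝ v (pp ξ u r θ)‖ₑ := by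
  wlog h : θ₂ ≤ θ₁ generalizing θ₁ θ₂
  · have := this h2 h1 (not_le.mp h).le
    rwa [← enorm_neg, neg_sub] at this
  have hcd : ContDiff ℝ 1 (fun θ : ℝ => v (pp ξ u r θ)) := hv.comp (pp_contDiff_th ξ u r)
  refine (enorm_sub_le_lintegral_deriv_of_contDiffOn_Icc hcd.contDiffOn h).trans ?_
  rw [restrict_Ioo_eq_restrict_Icc]
  refine (lintegral_mono_set (Icc_subset_Icc h2.1 h1.2)).trans ?_
  refine lintegral_mono fun θ => ?_
  have hd := ((hv.differentiable one_ne_zero (pp ξ u r θ)).hasFDerivAt).comp_hasDerivAt θ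
    (pp_hasDeriv_th ξ u r θ)
  have hd' : deriv (fun θ : ℝ => v (pp ξ u r θ)) θ = _ := hd.deriv
  rw [hd', mul_comm (ENNReal.ofReal r)]
  refine (ContinuousLinearMap.le_opENorm _ _).trans ?_
  gcongr
  rw [← ofReal_norm, norm_mul, norm_mul, norm_mul, hu, norm_exp_ofReal_mul_I]
  simp [abs_of_nonneg hr]

lemma ray_ftc {v : ℂ → E} (hv : ContDiff ℝ 1 v) (ξ u : ℂ) (hu : ‖u‖ = 1) (θ : ℝ)
    {a b : ℝ} (h : a ≤ b) :
    ‖v (pp ξ u b θ) - v (pp ξ u a θ)‖ₑ ≤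
      ∫⁻ r in Ioo a b, ‖fderiv ℝ v (pp ξ u r θ)‖ₑ := by
  have hcd : ContDiff ℝ 1 (fun r : ℝ => v (pp ξ u r θ)) := hv.comp (pp_contDiff_r ξ u θ)
  refine (enorm_sub_le_lintegral_deriv_of_contDiffOn_Icc hcd.contDiffOn h).trans ?_
  rw [restrict_Ioo_eq_restrict_Icc]
  refine lintegral_mono fun r => ?_
  have hd := ((hv.differentiable one_ne_zero (pp ξ u r θ)).hasFDerivAt).comp_hasDerivAt r
    (pp_hasDeriv_r ξ u r θ)
  have hd' : deriv (fun r : ℝ => v (pp ξ u r θ)) r = _ := hd.deriv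
  rw [hd']
  refine (ContinuousLinearMap.le_opENorm _ _).trans ?_
  have : ‖u * cexp (θ * I)‖ₑ = 1 := by
    rw [← ofReal_norm, norm_mul, hu, norm_exp_ofReal_mul_I]; simp
  rw [this, mul_one]

end QC

namespace QC
open Complex Metric MeasureTheory Filter Topology Set
open scoped ENNReal NNReal


variable {E : Type*} [NormedAddCommGroup E] [NormedSpace ℝ E]

lemma lintegral_inv {a b : ℝ} (ha : 0 < a) (hab : a ≤ b) :
    ∫⁻ r in Ioo a b, ENNReal.ofReal (1 / r) = ENNReal.ofReal (Real.log (b / a)) := by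
  have hi : IntegrableOn (fun r : ℝ => 1 / r) (Ioc a b) := by
    rw [← intervalIntegrable_iff_integrableOn_Ioc_of_le hab]
    apply intervalIntegral.intervalIntegrable_one_div (f := fun r => r)
    · intro x hx
      rw [uIcc_of_le hab] at hx
      exact (ha.trans_le hx.1).ne'
    · exact continuousOn_id
  rw [restrict_Ioo_eq_restrict_Ioc, ← integral_one_div_of_pos ha (ha.trans_le hab),
    intervalIntegral.integral_of_le hab, ofReal_integral_eq_lintegral_ofReal hi]
  filter_upwards [ae_restrict_mem measurableSet_Ioc] with r hr
  exact (one_div_pos.mpr (ha.trans hr.1)).le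

lemma meas_fd {v : ℂ → E} (hv : ContDiff ℝ 1 v) : Continuous (fun z => ‖fderiv ℝ v z‖ₑ) := by
  have := hv.continuous_fderiv one_ne_zero
  fun_prop

lemma S1 {v : ℂ → E} (hv : ContDiff ℝ 1 v) (ξ : ℂ) {a b l : ℝ} (ha : 0 < a) (hab : a ≤ b)
    (hl : 0 ≤ l) {S : Set ℂ} (hS : MeasurableSet S) (hsub : ∀ z, dist z ξ ∈ Ioo a b → z ∈ S)
    (h : ∀ r ∈ Ioo a b, ∃ p ∈ sphere ξ r, ∃ q ∈ sphere ξ r, l ≤ ‖v p - v q‖) :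
    ENNReal.ofReal (l ^ 2 * Real.log (b / a)) ≤
      ENNReal.ofReal (2 * Real.pi) * ∫⁻ z in S, ‖fderiv ℝ v z‖ₑ ^ 2 := by
  have hm := meas_fd hv
  have hpc := pp_cont ξ 1
  have key : ∀ r ∈ Ioo a b, ENNReal.ofReal (l ^ 2) * ENNReal.ofReal (1 / r) ≤
      ENNReal.ofReal (2 * Real.pi) * ∫⁻ θ in Ioo (-Real.pi) Real.pi,
        ENNReal.ofReal r * ‖fderiv ℝ v (pp ξ 1 r θ)‖ₑ ^ 2 := by
    intro r hr
    have hr0 : 0 < r := ha.trans hr.1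
    obtain ⟨p, hp, q, hq, hpq⟩ := h r hr
    obtain ⟨θ₁, h1, rfl⟩ := pp_surj ξ hp
    obtain ⟨θ₂, h2, rfl⟩ := pp_surj ξ hq
    have e1 : ENNReal.ofReal l ≤ ∫⁻ θ in Ioo (-Real.pi) Real.pi,
        ENNReal.ofReal r * ‖fderiv ℝ v (pp ξ 1 r θ)‖ₑ := by
      refine le_trans ?_ (circle_ftc hv ξ 1 (by simp) hr0.le h1 h2)
      rw [← ofReal_norm]
      exact ENNReal.ofReal_le_ofReal hpq
    have hcr : Continuous (fun θ : ℝ => ‖fderiv ℝ v (pp ξ 1 r θ)‖ₑ) :=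
      hm.comp (hpc.comp (continuous_const.prodMk continuous_id))
    have e2 := cs_lintegral (volume.restrict (Ioo (-Real.pi) Real.pi)) (a := fun _ => 1)
      (b := fun θ => ENNReal.ofReal r * ‖fderiv ℝ v (pp ξ 1 r θ)‖ₑ) aemeasurable_const
      (hcr.measurable.const_mul _).aemeasurable
    simp only [one_mul, one_pow, lintegral_const, Measure.restrict_apply_univ, Real.volume_Ioo] at e2
    have e3 : ENNReal.ofReal (l ^ 2) ≤ ENNReal.ofReal (2 * Real.pi) * (ENNReal.ofReal r *
        ∫⁻ θ in Ioo (-Real.pi) Real.pi, ENNReal.ofReal r * ‖fderiv ℝ v (pp ξ 1 r θ)‖ₑ ^ 2) := by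
      rw [ENNReal.ofReal_pow hl, ← lintegral_const_mul _ ((hcr.measurable.pow_const 2).const_mul _)]
      refine (pow_le_pow_left' e1 2).trans (e2.trans (le_of_eq ?_))
      congr 1
      · congr 1; ring
      · congr 1; ext θ; ring
    calc ENNReal.ofReal (l ^ 2) * ENNReal.ofReal (1 / r)
        ≤ ENNReal.ofReal (2 * Real.pi) * (ENNReal.ofReal r *
        ∫⁻ θ in Ioo (-Real.pi) Real.pi, ENNReal.ofReal r * ‖fderiv ℝ v (pp ξ 1 r θ)‖ₑ ^ 2) *
          ENNReal.ofReal (1 / r) := by gcongr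
      _ = ENNReal.ofReal (2 * Real.pi) * (∫⁻ θ in Ioo (-Real.pi) Real.pi,
          ENNReal.ofReal r * ‖fderiv ℝ v (pp ξ 1 r θ)‖ₑ ^ 2) *
          (ENNReal.ofReal r * ENNReal.ofReal (1 / r)) := by ring
      _ = _ := by
        rw [← ENNReal.ofReal_mul hr0.le, mul_one_div_cancel hr0.ne']; simp
  have hmm : Measurable (fun p : ℝ × ℝ => ENNReal.ofReal p.1 * ‖fderiv ℝ v (pp ξ 1 p.1 p.2)‖ₑ ^ 2) := by
    have := (hm.comp hpc).measurable
    exact (ENNReal.measurable_ofReal.comp measurable_fst).mul (this.pow_const 2)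
  have hpg := polar_ge (fun z => ‖fderiv ℝ v z‖ₑ) hm.measurable ξ 1 (by simp) (a := a) (b := b)
    ha.le le_rfl le_rfl hS (by
      intro r hr θ _
      apply hsub
      rwa [pp_dist ξ 1 (by simp) (ha.trans hr.1).le])
  rw [Measure.volume_eq_prod, setLIntegral_prod _ hmm.aemeasurable] at hpg
  have hin := setLIntegral_mono' (μ := volume) measurableSet_Ioo key
  rw [lintegral_const_mul' _ _ ENNReal.ofReal_ne_top, lintegral_const_mul' _ _ ENNReal.ofReal_ne_top,
    lintegral_inv ha hab, ← ENNReal.ofReal_mul (by positivity)] at hin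
  exact hin.trans (by gcongr)

lemma S2 {v : ℂ → E} (hv : ContDiff ℝ 1 v) (ξ u : ℂ) (hu : ‖u‖ = 1) {a b α β l : ℝ} (ha : 0 < a)
    (hab : a ≤ b) (hα : -Real.pi ≤ α) (hβ : β ≤ Real.pi)
    (hl : 0 ≤ l) {S : Set ℂ} (hS : MeasurableSet S)
    (hsub : ∀ r ∈ Ioo a b, ∀ θ ∈ Ioo α β, pp ξ u r θ ∈ S)
    (h : ∀ θ ∈ Ioo α β, l ≤ ‖v (pp ξ u b θ) - v (pp ξ u a θ)‖) :
    ENNReal.ofReal (l ^ 2 * (β - α)) ≤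
      ENNReal.ofReal (b / a) * ∫⁻ z in S, ‖fderiv ℝ v z‖ₑ ^ 2 := by
  have hm := meas_fd hv
  have hpc := pp_cont ξ u
  have key : ∀ θ ∈ Ioo α β, ENNReal.ofReal (l ^ 2) ≤
      ENNReal.ofReal (b / a) * ∫⁻ r in Ioo a b,
        ENNReal.ofReal r * ‖fderiv ℝ v (pp ξ u r θ)‖ₑ ^ 2 := by
    intro θ hθ
    have e1 : ENNReal.ofReal l ≤ ∫⁻ r in Ioo a b, ‖fderiv ℝ v (pp ξ u r θ)‖ₑ := by
      refine le_trans ?_ (ray_ftc hv ξ u hu θ hab)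
      rw [← ofReal_norm]
      exact ENNReal.ofReal_le_ofReal (h θ hθ)
    have hcr : Continuous (fun r : ℝ => ‖fderiv ℝ v (pp ξ u r θ)‖ₑ) :=
      hm.comp (hpc.comp (continuous_id.prodMk continuous_const))
    have e2 := cs_lintegral (volume.restrict (Ioo a b)) (a := fun _ => 1)
      (b := fun r => ‖fderiv ℝ v (pp ξ u r θ)‖ₑ) aemeasurable_const hcr.measurable.aemeasurable
    simp only [one_mul, one_pow, lintegral_const, Measure.restrict_apply_univ, Real.volume_Ioo] at e2
    have e4 : ENNReal.ofReal (b - a) ≤ ENNReal.ofReal (b / a) * ENNReal.ofReal a := by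
      rw [← ENNReal.ofReal_mul (div_nonneg (ha.le.trans hab) ha.le), div_mul_cancel₀ _ ha.ne']
      exact ENNReal.ofReal_le_ofReal (by linarith)
    have e5 : ENNReal.ofReal a * ∫⁻ r in Ioo a b, ‖fderiv ℝ v (pp ξ u r θ)‖ₑ ^ 2 ≤
        ∫⁻ r in Ioo a b, ENNReal.ofReal r * ‖fderiv ℝ v (pp ξ u r θ)‖ₑ ^ 2 := by
      rw [← lintegral_const_mul _ (hcr.measurable.pow_const 2)]
      refine setLIntegral_mono' measurableSet_Ioo fun r hr => ?_
      gcongr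
      exact hr.1.le
    rw [ENNReal.ofReal_pow hl]
    refine (pow_le_pow_left' e1 2).trans (e2.trans ?_)
    calc _ ≤ (ENNReal.ofReal (b / a) * ENNReal.ofReal a) *
          ∫⁻ r in Ioo a b, ‖fderiv ℝ v (pp ξ u r θ)‖ₑ ^ 2 := by gcongr
      _ ≤ _ := by rw [mul_assoc]; gcongr
  have hmm : Measurable (fun p : ℝ × ℝ => ENNReal.ofReal p.1 * ‖fderiv ℝ v (pp ξ u p.1 p.2)‖ₑ ^ 2) := by
    have := (hm.comp hpc).measurable
    exact (ENNReal.measurable_ofReal.comp measurable_fst).mul (this.pow_const 2)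
  have hpg := polar_ge (fun z => ‖fderiv ℝ v z‖ₑ) hm.measurable ξ u hu (a := a) (b := b)
    ha.le hα hβ hS hsub
  rw [Measure.volume_eq_prod, setLIntegral_prod_symm _ hmm.aemeasurable] at hpg
  have hin := setLIntegral_mono' (μ := volume) measurableSet_Ioo key
  rw [lintegral_const_mul' _ _ ENNReal.ofReal_ne_top, lintegral_const, Measure.restrict_apply_univ,
    Real.volume_Ioo, ← ENNReal.ofReal_mul (by positivity)] at hin
  exact hin.trans (by gcongr)

lemma S3 {v : ℂ → ℝ} (hv : ContDiff ℝ 1 v) (ξ : ℂ) {s α β : ℝ} (hs : 0 < s) (hαβ : α ≤ β)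
    (h1 : ∀ r ∈ Ioo (s/2) s, ∃ p ∈ sphere ξ r, v p ≤ α)
    (h2 : ∀ r ∈ Ioo s (2*s), ∃ p ∈ sphere ξ r, β ≤ v p) :
    ENNReal.ofReal ((β - α) ^ 2) ≤
      ENNReal.ofReal 100 * ∫⁻ z in closedBall ξ (2*s), ‖fderiv ℝ v z‖ₑ ^ 2 := by
  set l := (β - α) / 3 with hl
  have hl0 : 0 ≤ l := by rw [hl]; linarith
  set En := ∫⁻ z in closedBall ξ (2*s), ‖fderiv ℝ v z‖ₑ ^ 2
  have hlog : 0.69 < Real.log 2 := by have := Real.log_two_gt_d9; linarith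
  have hpi : Real.pi < 3.15 := Real.pi_lt_d2
  have hpi3 := Real.pi_gt_three
  have circ : ∀ a, 0 < a → 2 * a ≤ 2 * s → (∀ r ∈ Ioo a (2 * a), ∃ p ∈ sphere ξ r, ∃ q ∈ sphere ξ r, l ≤ ‖v p - v q‖) →
      ENNReal.ofReal ((β - α) ^ 2) ≤ ENNReal.ofReal 100 * En := by
    intro a ha has h
    have := S1 hv ξ (b := 2 * a) ha (by linarith) hl0 (S := closedBall ξ (2*s)) measurableSet_closedBall
      (fun z hz => by rw [mem_closedBall]; linarith [hz.2]) h
    rw [mul_div_assoc, div_self ha.ne', mul_one] at this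
    have e : ENNReal.ofReal ((β - α) ^ 2) = ENNReal.ofReal (9 / Real.log 2) * ENNReal.ofReal (l ^ 2 * Real.log 2) := by
      rw [← ENNReal.ofReal_mul (by positivity)]
      congr 1
      rw [hl]; field_simp; try ring
    rw [e]
    calc _ ≤ ENNReal.ofReal (9 / Real.log 2) * (ENNReal.ofReal (2 * Real.pi) * En) := by gcongr
      _ = ENNReal.ofReal (9 / Real.log 2 * (2 * Real.pi)) * En := by
        rw [ENNReal.ofReal_mul (p := 9 / Real.log 2) (q := 2 * Real.pi) (by positivity), mul_assoc]
      _ ≤ _ := by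
        gcongr
        rw [div_mul_eq_mul_div, div_le_iff₀ (by linarith)]
        nlinarith
  by_cases hA : ∀ r ∈ Ioo (s/2) (2 * (s/2)), ∃ p ∈ sphere ξ r, ∃ q ∈ sphere ξ r, l ≤ ‖v p - v q‖
  · exact circ (s/2) (by linarith) (by linarith) hA
  by_cases hB : ∀ r ∈ Ioo s (2 * s), ∃ p ∈ sphere ξ r, ∃ q ∈ sphere ξ r, l ≤ ‖v p - v q‖
  · exact circ s hs le_rfl hB
  push Not at hA hB
  obtain ⟨r₁, hr1, hA⟩ := hA
  obtain ⟨r₂, hr2, hB⟩ := hB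
  have hr1' : r₁ ∈ Ioo (s/2) s := ⟨hr1.1, by linarith [hr1.2]⟩
  obtain ⟨p, hp, hpv⟩ := h1 r₁ hr1'
  obtain ⟨q, hq, hqv⟩ := h2 r₂ hr2
  have r1pos : 0 < r₁ := by linarith [hr1.1]
  have := S2 hv ξ 1 (by simp) (α := -Real.pi) (β := Real.pi) (l := l) r1pos (b := r₂)
    (by linarith [hr1'.2, hr2.1]) le_rfl le_rfl hl0 (S := closedBall ξ (2*s)) measurableSet_closedBall
    (by
      intro r hr θ _
      rw [mem_closedBall, pp_dist ξ 1 (by simp) (r1pos.trans hr.1).le]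
      linarith [hr.2, hr2.2])
    (by
      intro θ _
      have a1 := hA p hp (pp ξ 1 r₁ θ) (pp_dist ξ 1 (by simp) r1pos.le θ)
      have a2 := hB q hq (pp ξ 1 r₂ θ) (pp_dist ξ 1 (by simp) (by linarith [hr2.1]) θ)
      rw [Real.norm_eq_abs, abs_lt] at a1 a2
      rw [Real.norm_eq_abs]
      refine le_trans ?_ (le_abs_self _)
      have : 3 * l = β - α := by rw [hl]; ring
      linarith [a1.1, a1.2, a2.1, a2.2])
  have e : ENNReal.ofReal ((β - α) ^ 2) = ENNReal.ofReal (9 / (2 * Real.pi)) * ENNReal.ofReal (l ^ 2 * (Real.pi - -Real.pi)) := by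
    rw [← ENNReal.ofReal_mul (by positivity)]
    congr 1
    rw [hl]; field_simp; try ring
  rw [e]
  calc _ ≤ ENNReal.ofReal (9 / (2 * Real.pi)) * (ENNReal.ofReal (r₂ / r₁) * En) := by gcongr
      _ = ENNReal.ofReal (9 / (2 * Real.pi) * (r₂ / r₁)) * En := by
        rw [ENNReal.ofReal_mul (by positivity), mul_assoc]
      _ ≤ _ := by
        gcongr
        have b1 : 9 / (2 * Real.pi) ≤ 2 := by
          rw [div_le_iff₀ (by linarith)]; linarith
        have b2 : r₂ / r₁ ≤ 4 := by
          rw [div_le_iff₀ r1pos]; linarith [hr2.2, hr1.1]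
        have b3 : 0 ≤ r₂ / r₁ := div_nonneg (by linarith [hr2.1]) r1pos.le
        nlinarith

end QC

namespace QC
open Complex Metric MeasureTheory Filter Topology Set
open scoped ENNReal NNReal


lemma energy_l {f : ℂ → ℂ} {F : ℕ → ℂ → ℂ} {C : ℝ} (hd : QCData f F C)
    {A : Set ℂ} (hA : MeasurableSet A) (hb : Bornology.IsBounded A) {h : ℂ → ℝ} (hh : Continuous h)
    {ε : ℝ} (hε : 0 < ε) : ∀ᶠ n in atTop,
      ∫⁻ z in A, (‖h (F n z)‖ₑ * ‖fderiv ℝ (F n) z‖ₑ) ^ 2 ≤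
        ENNReal.ofReal (C * (∫ w in f '' A, h w ^ 2) + ε) := by
  filter_upwards [hd.energy A hA hb h hh ε hε] with n hn
  have hc : Continuous (fun z => h (F n z) ^ 2 * ‖fderiv ℝ (F n) z‖ ^ 2) := by
    have h1 : Continuous (fderiv ℝ (F n)) := (hd.smooth n).continuous_fderiv (by simp)
    have h2 : Continuous (F n) := (hd.smooth n).continuous
    exact ((hh.comp h2).pow 2).mul (h1.norm.pow 2)
  have hi : IntegrableOn (fun z => h (F n z) ^ 2 * ‖fderiv ℝ (F n) z‖ ^ 2) A := by
    have : IsCompact (closure A) := hb.isCompact_closure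
    exact (hc.continuousOn.integrableOn_compact this).mono_set subset_closure
  have := ENNReal.ofReal_le_ofReal hn
  rw [ofReal_integral_eq_lintegral_ofReal hi (Eventually.of_forall fun z => by positivity)] at this
  refine le_trans (le_of_eq ?_) this
  refine lintegral_congr fun z => ?_
  rw [← ofReal_norm, ← ofReal_norm (fderiv ℝ (F n) z), ← ENNReal.ofReal_mul (norm_nonneg _),
    ← ENNReal.ofReal_pow (by positivity), mul_pow, Real.norm_eq_abs, sq_abs]

lemma energy_one {f : ℂ → ℂ} {F : ℕ → ℂ → ℂ} {C : ℝ} (hd : QCData f F C)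
    {A : Set ℂ} (hA : MeasurableSet A) (hb : Bornology.IsBounded A)
    {ε : ℝ} (hε : 0 < ε) : ∀ᶠ n in atTop,
      ∫⁻ z in A, ‖fderiv ℝ (F n) z‖ₑ ^ 2 ≤
        ENNReal.ofReal (C * (volume (f '' A)).toReal + ε) := by
  have := energy_l hd hA hb (h := fun _ => 1) continuous_const hε
  simpa [Measure.real] using this

lemma energy_T {f : ℂ → ℂ} {F : ℕ → ℂ → ℂ} {C : ℝ} (hd : QCData f F C)
    {A : Set ℂ} (hA : MeasurableSet A) (hb : Bornology.IsBounded A) {h T : ℂ → ℝ} (hh : Continuous h)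
    (hT : ContDiff ℝ 1 T) (hTh : ∀ w, ‖fderiv ℝ T w‖ ≤ h w)
    {ε : ℝ} (hε : 0 < ε) : ∀ᶠ n in atTop,
      ∫⁻ z in A, ‖fderiv ℝ (T ∘ F n) z‖ₑ ^ 2 ≤
        ENNReal.ofReal (C * (∫ w in f '' A, h w ^ 2) + ε) := by
  filter_upwards [energy_l hd hA hb hh hε] with n hn
  refine le_trans (lintegral_mono fun z => ?_) hn
  have h1 : DifferentiableAt ℝ T (F n z) := (hT.differentiable (by simp)) _
  have h2 : DifferentiableAt ℝ (F n) z := ((hd.smooth n).differentiable (by simp)) _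
  gcongr
  rw [fderiv_comp z h1 h2, ← ofReal_norm, ← ofReal_norm (h _), ← ofReal_norm (fderiv ℝ (F n) z),
    ← ENNReal.ofReal_mul (norm_nonneg _)]
  apply ENNReal.ofReal_le_ofReal
  refine (ContinuousLinearMap.opNorm_comp_le _ _).trans ?_
  gcongr
  exact (hTh _).trans (le_abs_self _)

lemma eps_lim {a b c d l : ℝ} (h0 : 0 < l)
    (h : ∀ ε, 0 < ε → ε < l → (l - ε) ^ 2 * a ≤ b * (c + ε * d)) : l ^ 2 * a ≤ b * c := by
  have t1 : Tendsto (fun ε : ℝ => (l - ε) ^ 2 * a) (𝓝[>] 0) (𝓝 ((l - 0) ^ 2 * a)) :=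
    (Continuous.tendsto (by fun_prop) 0).mono_left nhdsWithin_le_nhds
  have t2 : Tendsto (fun ε : ℝ => b * (c + ε * d)) (𝓝[>] 0) (𝓝 (b * (c + 0 * d))) :=
    (Continuous.tendsto (by fun_prop) 0).mono_left nhdsWithin_le_nhds
  have := le_of_tendsto_of_tendsto t1 t2 (by
    filter_upwards [Ioo_mem_nhdsGT h0] with ε hε using h ε hε.1 hε.2)
  simpa using this

lemma real_of_enn {x b y : ℝ} (hb : 0 ≤ b) (hy : 0 ≤ y) {I : ℝ≥0∞}
    (h : ENNReal.ofReal x ≤ ENNReal.ofReal b * I) (hI : I ≤ ENNReal.ofReal y) : x ≤ b * y := by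
  have : ENNReal.ofReal x ≤ ENNReal.ofReal (b * y) := by
    rw [ENNReal.ofReal_mul hb]; exact h.trans (by gcongr)
  exact (ENNReal.ofReal_le_ofReal_iff (by positivity)).1 this

lemma unif_near {F : ℕ → ℂ → ℂ} {f : ℂ → ℂ} (hu : ∀ R, TendstoUniformlyOn F f atTop (closedBall 0 R))
    (ξ : ℂ) (b : ℝ) {ε : ℝ} (hε : 0 < ε) : ∀ᶠ n in atTop, ∀ z ∈ closedBall ξ b, ‖F n z - f z‖ < ε := by
  have := (Metric.tendstoUniformlyOn_iff.1 (hu (b + ‖ξ‖))) ε hε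
  filter_upwards [this] with n hn z hz
  have := hn z (by
    rw [mem_closedBall_zero_iff]; rw [mem_closedBall, dist_eq_norm] at hz
    calc ‖z‖ = ‖(z - ξ) + ξ‖ := by simp
      _ ≤ ‖z - ξ‖ + ‖ξ‖ := norm_add_le _ _
      _ ≤ _ := by linarith)
  rwa [dist_comm, dist_eq_norm] at this

lemma diff_near {x y x' y' : ℂ} {l ε : ℝ} (h : l ≤ ‖x - y‖) (hx : ‖x' - x‖ < ε / 2)
    (hy : ‖y' - y‖ < ε / 2) : l - ε ≤ ‖x' - y'‖ := by
  have : ‖x - y‖ ≤ ‖x' - y'‖ + ‖x' - x‖ + ‖y' - y‖ := by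
    calc ‖x - y‖ = ‖(x' - y') - (x' - x) + (y' - y)‖ := by congr 1; ring
      _ ≤ _ := (norm_add_le _ _).trans (by gcongr; exact norm_sub_le _ _)
  linarith

lemma limA {f : ℂ → ℂ} {F : ℕ → ℂ → ℂ} {C : ℝ} (hd : QCData f F C) (ξ : ℂ) {a b l : ℝ} (ha : 0 < a)
    (hab : a ≤ b) (hl : 0 < l)
    (h : ∀ r ∈ Ioo a b, ∃ p ∈ sphere ξ r, ∃ q ∈ sphere ξ r, l ≤ ‖f p - f q‖) :
    l ^ 2 * Real.log (b / a) ≤ (2 * Real.pi) * (C * (volume (f '' (ball ξ b))).toReal) := by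
  have hC := hd.nonneg
  refine eps_lim (d := 1) hl fun ε hε hεl => ?_
  obtain ⟨n, h1, h2⟩ := ((energy_one hd (A := ball ξ b) measurableSet_ball isBounded_ball hε).and
    (unif_near hd.unif ξ b (half_pos hε))).exists
  rw [mul_one]
  refine real_of_enn (by positivity) (by positivity)
    (S1 ((hd.smooth n).of_le (by simp)) ξ ha hab (l := l - ε) (by linarith) (S := ball ξ b)
      measurableSet_ball (fun z hz => hz.2) ?_) h1
  intro r hr
  obtain ⟨p, hp, q, hq, hpq⟩ := h r hr
  have hs : sphere ξ r ⊆ closedBall ξ b := sphere_subset_closedBall.trans (closedBall_subset_closedBall hr.2.le)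
  exact ⟨p, hp, q, hq, diff_near hpq (h2 p (hs hp)) (h2 q (hs hq))⟩

lemma limB {f : ℂ → ℂ} {F : ℕ → ℂ → ℂ} {C : ℝ} (hd : QCData f F C) (ξ u : ℂ) (hu : ‖u‖ = 1)
    {a b α β l : ℝ} (ha : 0 < a)
    (hab : a ≤ b) (hα : -Real.pi ≤ α) (hβ : β ≤ Real.pi) (hl : 0 < l)
    {S : Set ℂ} (hS : MeasurableSet S) (hSb : S ⊆ ball ξ b)
    (hsub : ∀ r ∈ Ioo a b, ∀ θ ∈ Ioo α β, pp ξ u r θ ∈ S)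
    (h : ∀ θ ∈ Ioo α β, l ≤ ‖f (pp ξ u b θ) - f (pp ξ u a θ)‖) :
    l ^ 2 * (β - α) ≤ (b / a) * (C * (volume (f '' S)).toReal) := by
  have hC := hd.nonneg
  have hba : 0 ≤ b / a := div_nonneg (ha.le.trans hab) ha.le
  refine eps_lim (d := 1) hl fun ε hε hεl => ?_
  obtain ⟨n, h1, h2⟩ := ((energy_one hd hS (isBounded_ball.subset hSb) hε).and
    (unif_near hd.unif ξ b (half_pos hε))).exists
  rw [mul_one]
  refine real_of_enn hba (by positivity)
    (S2 ((hd.smooth n).of_le (by simp)) ξ u hu ha hab hα hβ (l := l - ε) (by linarith) hS hsub ?_) h1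
  intro θ hθ
  refine diff_near (h θ hθ) (h2 _ ?_) (h2 _ ?_)
  · rw [mem_closedBall, pp_dist ξ u hu (ha.le.trans hab)]
  · rw [mem_closedBall, pp_dist ξ u hu ha.le]; exact hab

lemma limC {f : ℂ → ℂ} {F : ℕ → ℂ → ℂ} {C : ℝ} (hd : QCData f F C) (ξ : ℂ) {s α β : ℝ} (hs : 0 < s)
    (hαβ : α < β) {h T : ℂ → ℝ} (hh : Continuous h)
    (hT : ContDiff ℝ 1 T) (hTu : UniformContinuous T) (hTh : ∀ w, ‖fderiv ℝ T w‖ ≤ h w)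
    (h1 : ∀ r ∈ Ioo (s/2) s, ∃ p ∈ sphere ξ r, T (f p) ≤ α)
    (h2 : ∀ r ∈ Ioo s (2*s), ∃ p ∈ sphere ξ r, β ≤ T (f p)) :
    (β - α) ^ 2 ≤ 100 * (C * (∫ w in f '' closedBall ξ (2*s), h w ^ 2)) := by
  have hC := hd.nonneg
  have hi : 0 ≤ ∫ w in f '' closedBall ξ (2*s), h w ^ 2 := integral_nonneg fun w => by positivity
  have := eps_lim (a := 1) (b := 100) (c := C * (∫ w in f '' closedBall ξ (2*s), h w ^ 2)) (d := 1)
    (l := β - α) (by linarith) (fun ε hε hεl => ?_)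
  · simpa using this
  obtain ⟨δ, hδ, hδT⟩ := Metric.uniformContinuous_iff.1 hTu (ε/2) (half_pos hε)
  obtain ⟨n, e1, e2⟩ := ((energy_T hd (A := closedBall ξ (2*s)) measurableSet_closedBall
    isBounded_closedBall hh hT hTh hε).and (unif_near hd.unif ξ (2*s) hδ)).exists
  rw [mul_one, mul_one]
  have hn : ∀ z ∈ closedBall ξ (2*s), |T (F n z) - T (f z)| < ε / 2 := by
    intro z hz
    have := e2 z hz
    rw [← dist_eq_norm] at this
    exact hδT this
  have key := S3 (v := T ∘ F n) (hT.comp ((hd.smooth n).of_le (by simp))) ξ hs (α := α + ε/2) (β := β - ε/2)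
    (by linarith)
    (by
      intro r hr
      obtain ⟨p, hp, hpT⟩ := h1 r hr
      refine ⟨p, hp, ?_⟩
      have := abs_lt.1 (hn p (closedBall_subset_closedBall (by linarith [hr.2]) (sphere_subset_closedBall hp)))
      simp only [Function.comp]; linarith [this.2])
    (by
      intro r hr
      obtain ⟨p, hp, hpT⟩ := h2 r hr
      refine ⟨p, hp, ?_⟩
      have := abs_lt.1 (hn p (closedBall_subset_closedBall (by linarith [hr.2]) (sphere_subset_closedBall hp)))
      simp only [Function.comp]; linarith [this.1])
  have := real_of_enn (by norm_num) (by positivity) key e1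
  refine le_trans (le_of_eq ?_) this
  ring

/-! topology -/

lemma cross {K : Set ℂ} (hK : IsPreconnected K) {ξ z₁ z₂ : ℂ} {r : ℝ} (h1 : z₁ ∈ K) (h2 : z₂ ∈ K)
    (hr1 : dist z₁ ξ ≤ r) (hr2 : r ≤ dist z₂ ξ) : ∃ p ∈ K, p ∈ sphere ξ r := by
  obtain ⟨p, hp, hpr⟩ := hK.intermediate_value h1 h2 (f := fun z => dist z ξ)
    (by fun_prop) ⟨hr1, hr2⟩
  exact ⟨p, hp, hpr⟩

lemma cross_seg (G : ℂ ≃ₜ ℂ) (ξ z₀ : ℂ) {r : ℝ} (hr0 : 0 ≤ r) (hr : r ≤ dist z₀ ξ) :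
    ∃ p ∈ sphere ξ r, ‖G p - G ξ‖ ≤ ‖G z₀ - G ξ‖ := by
  have hc : IsPreconnected (G.symm '' segment ℝ (G ξ) (G z₀)) :=
    ((convex_segment _ _).isPreconnected).image _ G.symm.continuous.continuousOn
  obtain ⟨p, ⟨w, hw, hwp⟩, hp⟩ := cross hc (ξ := ξ) (z₁ := ξ) (z₂ := z₀) (r := r)
    ⟨G ξ, left_mem_segment _ _ _, by simp⟩ ⟨G z₀, right_mem_segment _ _ _, by simp⟩ (by simpa) hr
  refine ⟨p, hp, ?_⟩
  have : G p = w := by rw [← hwp]; simp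
  rw [this]
  obtain ⟨t, ht, rfl⟩ := (segment_eq_image' ℝ (G ξ) (G z₀)) ▸ hw
  simp only [add_sub_cancel_left, norm_smul, Real.norm_eq_abs, abs_of_nonneg ht.1]
  exact mul_le_of_le_one_left (norm_nonneg _) ht.2

lemma cross_ray (G : ℂ ≃ₜ ℂ) (ξ z₀ d : ℂ) (hd : d ≠ 0) (t₀ : ℝ) (hz : G z₀ = G ξ + t₀ * d) {r : ℝ}
    (hr : dist z₀ ξ ≤ r) : ∃ p ∈ sphere ξ r, ∃ t : ℝ, t₀ ≤ t ∧ G p = G ξ + t * d := by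
  set R : Set ℂ := (fun t : ℝ => G ξ + t * d) '' Ici t₀
  have hc : IsPreconnected (G.symm '' R) := by
    refine (IsPreconnected.image (isPreconnected_Ici) _ ?_).image _ G.symm.continuous.continuousOn
    fun_prop
  have hun : ∃ z₂ ∈ G.symm '' R, r ≤ dist z₂ ξ := by
    by_contra! hcon
    have hsub : R ⊆ G '' closedBall ξ r := by
      intro w hw
      exact ⟨G.symm w, (hcon _ ⟨w, hw, rfl⟩).le, by simp⟩
    have hb : Bornology.IsBounded R :=
      ((isCompact_closedBall ξ r).image G.continuous).isBounded.subset hsub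
    obtain ⟨M, hM⟩ := (isBounded_iff_forall_norm_le.1 hb)
    have hd0 : 0 < ‖d‖ := norm_pos_iff.2 hd
    set t := max t₀ ((M + ‖G ξ‖ + 1) / ‖d‖)
    have h1 := hM _ ⟨t, (le_max_left _ _ : t₀ ≤ t), rfl⟩
    have h2 : (M + ‖G ξ‖ + 1) ≤ t * ‖d‖ := by
      rw [← div_le_iff₀ hd0]; exact le_max_right _ _
    have h3 : t * ‖d‖ ≤ ‖G ξ + t * d‖ + ‖G ξ‖ := by
      calc t * ‖d‖ ≤ |t| * ‖d‖ := by gcongr; exact le_abs_self _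
        _ = ‖(t : ℂ) * d‖ := by simp
        _ = ‖(G ξ + t * d) - G ξ‖ := by simp
        _ ≤ _ := norm_sub_le _ _
    simp only at h1
    linarith
  obtain ⟨z₂, hz2, hz2r⟩ := hun
  obtain ⟨p, ⟨w, ⟨t, ht, htw⟩, hwp⟩, hp⟩ := cross hc (ξ := ξ) (z₁ := z₀) (z₂ := z₂) (r := r)
    ⟨G z₀, ⟨t₀, self_mem_Ici, hz.symm⟩, by simp⟩ hz2 hr hz2r
  refine ⟨p, hp, t, ht, ?_⟩
  rw [← hwp]; simp [← htw]

end QC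

namespace QC
open Complex Metric MeasureTheory Filter Topology Set
open scoped ENNReal NNReal


noncomputable def TT (a b : ℝ) (ζ w : ℂ) : ℝ := (1/2) * (Real.log (‖w - ζ‖ ^ 2 + a) - Real.log (‖w - ζ‖ ^ 2 + b))

noncomputable def hh (a b : ℝ) (ζ w : ℂ) : ℝ := Real.sqrt ((b - a) / ((‖w - ζ‖ ^ 2 + a) * (‖w - ζ‖ ^ 2 + b)))

lemma hh_cont {a b : ℝ} (ha : 0 < a) (hb : 0 < b) (ζ : ℂ) : Continuous (hh a b ζ) := by
  unfold hh
  refine Real.continuous_sqrt.comp (Continuous.div (by fun_prop) (by fun_prop) fun w => ?_)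
  positivity

lemma TT_smooth {a b : ℝ} (ha : 0 < a) (hb : 0 < b) (ζ : ℂ) : ContDiff ℝ 1 (TT a b ζ) := by
  unfold TT
  have h : ContDiff ℝ 1 (fun w : ℂ => ‖w - ζ‖ ^ 2) := (contDiff_id.sub contDiff_const).norm_sq ℝ
  refine contDiff_const.mul (ContDiff.sub ?_ ?_)
  · exact (h.add contDiff_const).log fun w => by positivity
  · exact (h.add contDiff_const).log fun w => by positivity

lemma TT_fderiv {a b : ℝ} (ha : 0 < a) (hab : a ≤ b) (ζ w : ℂ) :
    ‖fderiv ℝ (TT a b ζ) w‖ ≤ hh a b ζ w := by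
  have hb : 0 < b := ha.trans_le hab
  set q := ‖w - ζ‖ with hq
  have hn : HasFDerivAt (fun w : ℂ => ‖w - ζ‖ ^ 2) (2 • (innerSL ℝ (w - ζ))) w := by
    have := ((hasFDerivAt_id (𝕜 := ℝ) w).sub_const ζ).norm_sq
    simpa using this
  have h1 := (hn.add_const a).log (by positivity)
  have h2 := (hn.add_const b).log (by positivity)
  have h3 := (h1.sub h2).const_mul (1/2 : ℝ)
  have h4 : fderiv ℝ (TT a b ζ) w = _ := h3.fderiv
  rw [h4, ← sub_smul, norm_smul, norm_smul]
  have hin : ‖(2 : ℕ) • (innerSL ℝ (w - ζ))‖ ≤ 2 * q := by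
    rw [two_smul]
    refine (norm_add_le _ _).trans ?_
    rw [innerSL_apply_norm]; linarith
  unfold hh
  apply Real.le_sqrt_of_sq_le
  rw [← hq]
  have hpos : 0 ≤ (q^2+a)⁻¹ - (q^2+b)⁻¹ := by
    rw [sub_nonneg]; apply inv_anti₀ (by positivity); linarith
  calc _ ≤ ((1/2) * (((q^2+a)⁻¹ - (q^2+b)⁻¹) * (2 * q))) ^ 2 := by
        gcongr
        · norm_num
        · rw [Real.norm_eq_abs, abs_of_nonneg hpos]
    _ = ((b - a) / ((q^2 + a) * (q^2+b))) * (q^2 * (b - a) / ((q^2 + a) * (q^2+b))) := by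
        field_simp; ring
    _ ≤ _ := by
        apply mul_le_of_le_one_right
        · apply div_nonneg (by linarith) (by positivity)
        · rw [div_le_one (by positivity)]
          nlinarith [sq_nonneg q, mul_pos ha hb, mul_nonneg (sq_nonneg q) ha.le, sq_nonneg (q^2)]

lemma TT_unif {a b : ℝ} (ha : 0 < a) (hab : a ≤ b) (ζ : ℂ) : UniformContinuous (TT a b ζ) := by
  have hb : 0 < b := ha.trans_le hab
  have : LipschitzWith (Real.toNNReal (Real.sqrt (b / (a * b)))) (TT a b ζ) := by
    refine lipschitzWith_of_nnnorm_fderiv_le ((TT_smooth ha hb ζ).differentiable (by simp)) fun w => ?_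
    rw [← NNReal.coe_le_coe, coe_nnnorm, Real.coe_toNNReal _ (Real.sqrt_nonneg _)]
    refine (TT_fderiv ha hab ζ w).trans ?_
    unfold hh
    apply Real.sqrt_le_sqrt
    gcongr
    · linarith
    · linarith [sq_nonneg ‖w - ζ‖]
    · linarith [sq_nonneg ‖w - ζ‖]
  exact this.uniformContinuous

lemma hh_int {a b : ℝ} (ha : 0 < a) (hab : a ≤ b) (ζ : ℂ) (S : Set ℂ) :
    ∫ w in S, hh a b ζ w ^ 2 ≤ Real.pi * Real.log (b / a) := by
  have hb : 0 < b := ha.trans_le hab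
  have hc := hh_cont ha hb ζ
  have hlog : 0 ≤ Real.log (b / a) := Real.log_nonneg (by rwa [one_le_div ha])
  have hpi := Real.pi_pos
  rw [integral_eq_lintegral_of_nonneg_ae (Eventually.of_forall fun w => by positivity)
    (Continuous.aestronglyMeasurable (by fun_prop))]
  apply ENNReal.toReal_le_of_le_ofReal (by positivity)
  refine (setLIntegral_le_lintegral _ _).trans ?_
  rw [← lintegral_pp ζ 1 (by simp) _ (by fun_prop)]
  have hm : Measurable (fun p : ℝ × ℝ => ENNReal.ofReal p.1 * ENNReal.ofReal (hh a b ζ (pp ζ 1 p.1 p.2) ^ 2)) := by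
    have := pp_cont ζ 1
    have h2 : Continuous fun p : ℝ × ℝ => hh a b ζ (pp ζ 1 p.1 p.2) := hc.comp this
    exact (ENNReal.measurable_ofReal.comp measurable_fst).mul
      (ENNReal.measurable_ofReal.comp (h2.pow 2).measurable)
  rw [Measure.volume_eq_prod, setLIntegral_prod _ hm.aemeasurable]
  set g : ℝ → ℝ := fun r => (1/2) * (Real.log (r ^ 2 + a) - Real.log (r ^ 2 + b))
  set g' : ℝ → ℝ := fun r => r * ((b - a) / ((r ^ 2 + a) * (r ^ 2 + b)))
  have hder : ∀ r ∈ Ici (0:ℝ), HasDerivAt g (g' r) r := by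
    intro r _
    have hn : HasDerivAt (fun r : ℝ => r ^ 2) (2 * r) r := by simpa using hasDerivAt_pow 2 r
    have h1 := (hn.add_const a).log (by positivity)
    have h2 := (hn.add_const b).log (by positivity)
    have h3 : HasDerivAt g _ r := (h1.sub h2).const_mul (1/2 : ℝ)
    rw [show g' r = _ from ?_]; exact h3
    simp only [g']
    have : r ^ 2 + a ≠ 0 := by positivity
    have : r ^ 2 + b ≠ 0 := by positivity
    field_simp
    ring
  have hpos : ∀ r ∈ Ioi (0:ℝ), 0 ≤ g' r := by
    intro r hr
    have : (0:ℝ) ≤ r := le_of_lt hr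
    have : 0 ≤ b - a := by linarith
    simp only [g']; positivity
  have hlim : Tendsto g atTop (𝓝 0) := by
    have e : g = fun r => (1/2) * Real.log (1 - (b - a) * (r ^ 2 + b)⁻¹) := by
      funext r
      simp only [g]
      rw [← Real.log_div (by positivity) (by positivity)]
      congr 2
      have : r ^ 2 + b ≠ 0 := by positivity
      field_simp; ring
    have t1 : Tendsto (fun r : ℝ => (r ^ 2 + b)⁻¹) atTop (𝓝 0) :=
      (tendsto_atTop_add_const_right _ _ (tendsto_pow_atTop (by norm_num))).inv_tendsto_atTop
    have t2 : Tendsto (fun r : ℝ => 1 - (b - a) * (r ^ 2 + b)⁻¹) atTop (𝓝 1) := by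
      simpa using (tendsto_const_nhds (x := (1:ℝ))).sub (t1.const_mul (b - a))
    have t3 := (t2.log one_ne_zero).const_mul (1/2 : ℝ)
    rw [e]
    simpa using t3
  have I1 := integrableOn_Ioi_deriv_of_nonneg' hder hpos hlim
  have I2 := integral_Ioi_of_hasDerivAt_of_nonneg' hder hpos hlim
  have hg0 : 0 - g 0 = (1/2) * Real.log (b / a) := by
    simp only [g]; rw [Real.log_div hb.ne' ha.ne']; simp; ring
  rw [hg0] at I2
  have I3 : ∫⁻ r in Ioi (0:ℝ), ENNReal.ofReal (g' r) = ENNReal.ofReal ((1/2) * Real.log (b / a)) := by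
    rw [← I2, ofReal_integral_eq_lintegral_ofReal I1]
    exact (ae_restrict_iff' measurableSet_Ioi).2 (Eventually.of_forall hpos)
  have : ∀ r ∈ Ioi (0:ℝ), (∫⁻ θ in Ioo (-Real.pi) Real.pi, ENNReal.ofReal r * ENNReal.ofReal (hh a b ζ (pp ζ 1 r θ) ^ 2))
      = ENNReal.ofReal (g' r) * ENNReal.ofReal (2 * Real.pi) := by
    intro r hr
    have h0 : (0:ℝ) ≤ r := le_of_lt hr
    have e : ∀ θ, ENNReal.ofReal r * ENNReal.ofReal (hh a b ζ (pp ζ 1 r θ) ^ 2) = ENNReal.ofReal (g' r) := by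
      intro θ
      have hd := pp_dist ζ 1 (by simp) h0 θ
      rw [dist_eq_norm] at hd
      have : 0 ≤ b - a := by linarith
      rw [← ENNReal.ofReal_mul h0, hh, hd, Real.sq_sqrt (by positivity)]
    simp only [e, lintegral_const, Measure.restrict_apply_univ, Real.volume_Ioo]
    congr 2; ring
  rw [setLIntegral_congr_fun measurableSet_Ioi this, lintegral_mul_const' _ _ ENNReal.ofReal_ne_top, I3,
    ← ENNReal.ofReal_mul (by positivity)]
  apply ENNReal.ofReal_le_ofReal
  apply le_of_eq; ring

end QC

namespace QC
open Complex Metric MeasureTheory Filter Topology Set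
open scoped ENNReal NNReal


lemma step3a {G : ℂ ≃ₜ ℂ} {F : ℕ → ℂ → ℂ} {C : ℝ} (hd : QCData G F C) (ξ z₀ z₁ : ℂ) {s : ℝ} (hs : 0 < s)
    (hz0 : z₀ ∈ sphere ξ s) (hz1 : z₁ ∈ sphere ξ s) :
    ‖G z₁ - G ξ‖ ≤ Real.exp (2 + 200 * Real.pi * C) * ‖G z₀ - G ξ‖ := by
  have hC := hd.nonneg
  have hpi := Real.pi_pos
  set l := ‖G z₀ - G ξ‖ with hl
  set L := ‖G z₁ - G ξ‖ with hL
  have hexp : 1 ≤ Real.exp (2 + 200 * Real.pi * C) := Real.one_le_exp (by positivity)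
  have hl0 : 0 < l := by
    rw [hl, norm_pos_iff, sub_ne_zero]
    intro h
    have := G.injective h
    rw [this] at hz0
    simp at hz0; linarith
  rcases le_or_gt L l with h | hlL
  · nlinarith
  have hL0 : 0 < L := hl0.trans hlL
  set a := l ^ 2 with ha
  set b := L ^ 2 with hb
  have ha0 : 0 < a := by positivity
  have hb0 : 0 < b := by positivity
  have hab : a < b := by rw [ha, hb]; gcongr
  set α := (1/2) * (Real.log (a + a) - Real.log (a + b)) with hα
  set β := (1/2) * (Real.log (b + a) - Real.log (b + b)) with hβ
  set Y := Real.log (b / a) with hY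
  have hY0 : 0 < Y := Real.log_pos (by rwa [one_lt_div ha0])
  have hYe : Y = Real.log b - Real.log a := Real.log_div hb0.ne' ha0.ne'
  have hbe : Real.log b = 2 * Real.log L := by rw [hb, Real.log_pow]; norm_num
  have hae : Real.log a = 2 * Real.log l := by rw [ha, Real.log_pow]; norm_num
  have haa : Real.log (a + a) = Real.log 2 + Real.log a := by
    rw [← two_mul, Real.log_mul (by norm_num) ha0.ne']
  have hbb : Real.log (b + b) = Real.log 2 + Real.log b := by
    rw [← two_mul, Real.log_mul (by norm_num) hb0.ne']
  have hab1 : Real.log b ≤ Real.log (b + a) := Real.log_le_log hb0 (by linarith)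
  have hl2 : Real.log 2 < 0.7 := by have := Real.log_two_lt_d9; linarith
  have hdiff : β - α = Real.log (b + a) - Real.log 2 - (Real.log a + Real.log b) / 2 := by
    rw [hα, hβ, haa, hbb, add_comm a b]; ring
  have hlow : Y / 2 - Real.log 2 ≤ β - α := by rw [hdiff, hYe]; linarith
  have main : Y ≤ 4 + 400 * Real.pi * C := by
    by_contra! hcon
    have hY4 : 4 < Y := by have : 0 ≤ 400 * Real.pi * C := by positivity
                           linarith
    have hαβ : α < β := by linarith
    have mono : ∀ x y : ℝ, 0 ≤ x → x ≤ y →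
        Real.log (x + a) - Real.log (x + b) ≤ Real.log (y + a) - Real.log (y + b) := by
      intro x y hx hxy
      have : Real.log ((x + a) * (y + b)) ≤ Real.log ((y + a) * (x + b)) := by
        apply Real.log_le_log
        · have : 0 ≤ y := hx.trans hxy
          positivity
        · nlinarith
      have hy : 0 ≤ y := hx.trans hxy
      rw [Real.log_mul (by positivity) (by positivity), Real.log_mul (by positivity) (by positivity)] at this
      linarith
    have key := limC hd ξ hs hαβ (hh_cont ha0 hb0 (G ξ)) (TT_smooth ha0 hb0 (G ξ))
      (TT_unif ha0 hab.le (G ξ)) (TT_fderiv ha0 hab.le (G ξ))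
      (by
        intro r hr
        obtain ⟨p, hp, hpl⟩ := cross_seg G ξ z₀ (r := r) (by linarith [hr.1]) (by rw [mem_sphere.1 hz0]; exact hr.2.le)
        refine ⟨p, hp, ?_⟩
        have := mono (‖G p - G ξ‖ ^ 2) a (by positivity) (by rw [ha]; gcongr)
        simp only [TT, hα]; linarith)
      (by
        intro r hr
        obtain ⟨p, hp, t, ht, hpt⟩ := cross_ray G ξ z₁ (G z₁ - G ξ) (norm_pos_iff.1 hL0) 1 (by simp) (r := r)
          (by rw [mem_sphere.1 hz1]; exact hr.1.le)
        refine ⟨p, hp, ?_⟩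
        have hn : L ≤ ‖G p - G ξ‖ := by
          rw [hpt, add_sub_cancel_left, norm_mul, Complex.norm_real, Real.norm_eq_abs]
          exact le_mul_of_one_le_left (norm_nonneg _) (ht.trans (le_abs_self t))
        have := mono b (‖G p - G ξ‖ ^ 2) (by positivity) (by rw [hb]; gcongr)
        simp only [TT, hβ]; linarith)
    have hi := hh_int ha0 hab.le (G ξ) (G '' closedBall ξ (2 * s))
    have k2 : (β - α) ^ 2 ≤ 100 * (C * (Real.pi * Y)) := key.trans (by gcongr)
    have k3 : (Y / 2 - 1) ^ 2 ≤ (β - α) ^ 2 := by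
      apply pow_le_pow_left₀ <;> linarith
    have k4 : (4 + 400 * Real.pi * C) * Y < Y * Y := by gcongr
    nlinarith
  have : Real.log L ≤ (2 + 200 * Real.pi * C) + Real.log l := by linarith
  rw [← Real.exp_log hl0, ← Real.exp_add, ← Real.log_le_iff_le_exp hL0]
  exact this

lemma step3b {G : ℂ ≃ₜ ℂ} {F : ℕ → ℂ → ℂ} {C : ℝ} (hd : QCData G F C) (ξ z₁ : ℂ) {a b M : ℝ} (ha : 0 < a)
    (hab : a ≤ b) (hM : 0 < M) (hz1 : z₁ ∈ sphere ξ a) (hsub : G '' ball ξ b ⊆ ball (G ξ) M) :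
    ‖G z₁ - G ξ‖ ^ 2 * Real.log (b / a) ≤ (2 * Real.pi) * (C * (M ^ 2 * Real.pi)) := by
  have hC := hd.nonneg
  have hpi := Real.pi_pos
  have hne : G z₁ - G ξ ≠ 0 := by
    rw [sub_ne_zero]
    intro h
    have := G.injective h
    rw [this] at hz1
    simp at hz1; linarith
  refine (limA hd ξ ha hab (norm_pos_iff.2 hne) ?_).trans ?_
  · intro r hr
    obtain ⟨p, hp, t, ht, hpt⟩ := cross_ray G ξ z₁ (G z₁ - G ξ) hne 1 (by simp) (r := r)
      (by rw [mem_sphere.1 hz1]; exact hr.1.le)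
    obtain ⟨q, hq, t', ht', hqt⟩ := cross_ray G ξ ξ (-(G z₁ - G ξ)) (neg_ne_zero.2 hne) 0 (by simp) (r := r)
      (by rw [dist_self]; linarith [hr.1])
    refine ⟨p, hp, q, hq, ?_⟩
    have : G p - G q = ((t + t' : ℝ) : ℂ) * (G z₁ - G ξ) := by
      rw [hpt, hqt]; push_cast; ring
    rw [this, norm_mul, Complex.norm_real, Real.norm_eq_abs]
    exact le_mul_of_one_le_left (norm_nonneg _) ((by linarith : 1 ≤ t + t').trans (le_abs_self _))
  · gcongr
    have : volume (G '' ball ξ b) ≤ ENNReal.ofReal (M ^ 2 * Real.pi) := by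
      refine (measure_mono hsub).trans (le_of_eq ?_)
      rw [Complex.volume_ball, ENNReal.ofReal_mul (by positivity), ENNReal.ofReal_pow hM.le,
        ENNReal.ofReal, ENNReal.ofReal]
      congr 2
      simp [NNReal.pi, Real.toNNReal_of_nonneg hpi.le]; try rfl
    exact ENNReal.toReal_le_of_le_ofReal (by positivity) this

lemma vol_ball (z : ℂ) {r : ℝ} (hr : 0 ≤ r) : volume (ball z r) = ENNReal.ofReal (r ^ 2 * Real.pi) := by
  have hpi := Real.pi_pos
  rw [Complex.volume_ball, ENNReal.ofReal_mul (by positivity), ENNReal.ofReal_pow hr]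
  congr 1
  exact (ENNReal.ofReal_eq_coe_nnreal hpi.le).symm

lemma final {G : ℂ ≃ₜ ℂ} {F : ℕ → ℂ → ℂ} {C : ℝ} (hd : QCData G F C) :
    ∃ c : ℝ, 0 < c ∧ ∀ ξ ∈ sphere (0:ℂ) 1, ∀ ρ : ℝ, 0 < ρ → ∃ S : Set ℂ, MeasurableSet S ∧
      S ⊆ ball (G ξ) ρ ∧ Disjoint S (G '' ball 0 1) ∧ ENNReal.ofReal (c * (ρ ^ 2 * Real.pi)) ≤ volume S := by
  have hC := hd.nonneg
  have hpi := Real.pi_pos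
  set H := Real.exp (2 + 200 * Real.pi * C) with hH
  have hH0 : 0 < H := Real.exp_pos _
  set K := 8 * Real.pi ^ 2 * C * H ^ 2 + 1 with hK
  have hK0 : 0 < K := by positivity
  refine ⟨(1 / (4 * H ^ 2)) / (Real.exp K * (C + 1)), by positivity, ?_⟩
  intro ξ hξ ρ hρ
  have hξ1 : ‖ξ‖ = 1 := by simpa using hξ
  set Q : Set ℂ := {z | ρ ≤ ‖G z - G ξ‖} with hQ
  have hQc : IsClosed Q := isClosed_le continuous_const (by fun_prop)
  have hQn : Q.Nonempty := ⟨G.symm (G ξ + ρ), by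
    simp [hQ]; exact le_abs_self _⟩
  obtain ⟨z₁, hz1Q, hz1⟩ := hQc.exists_infDist_eq_dist hQn ξ
  set s := infDist ξ Q with hs
  have hs0 : 0 < s := by
    rw [hz1, dist_pos]
    rintro rfl
    simp [hQ] at hz1Q; linarith
  have hsub : ∀ z ∈ ball ξ s, ‖G z - G ξ‖ < ρ := by
    intro z hz
    by_contra! hcon
    have := infDist_le_dist_of_mem (x := ξ) (show z ∈ Q from hcon)
    rw [mem_ball, dist_comm] at hz
    linarith
  have hsub' : G '' ball ξ s ⊆ ball (G ξ) ρ := by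
    rintro _ ⟨z, hz, rfl⟩
    rw [mem_ball, dist_eq_norm]; exact hsub z hz
  set a := s / Real.exp K with ha
  have ha0 : 0 < a := by positivity
  have hexpK : 1 ≤ Real.exp K := Real.one_le_exp hK0.le
  have has : a ≤ s := div_le_self hs0.le hexpK
  have hsa : s / a = Real.exp K := by rw [ha]; field_simp
  have far : ∀ z ∈ sphere ξ s, ρ / H ≤ ‖G z - G ξ‖ := by
    intro z hz
    rw [div_le_iff₀' hH0]
    exact le_trans hz1Q (step3a hd ξ z z₁ hs0 hz (by rw [mem_sphere, dist_comm, hz1]))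
  have near : ∀ z ∈ sphere ξ a, ‖G z - G ξ‖ ≤ ρ / (2 * H) := by
    intro z hz
    have := step3b hd ξ z ha0 has hρ hz hsub'
    rw [hsa, Real.log_exp] at this
    refine (sq_le_sq₀ (norm_nonneg _) (by positivity)).1 ?_
    rw [div_pow, le_div_iff₀ (by positivity)]
    by_contra! hcon
    have h2 : ‖G z - G ξ‖ ^ 2 * K * (4 * H ^ 2) ≤ (2 * Real.pi) * (C * (ρ ^ 2 * Real.pi)) * (4 * H ^ 2) := by
      gcongr
    have h3 : (2 * Real.pi) * (C * (ρ ^ 2 * Real.pi)) * (4 * H ^ 2) = (K - 1) * ρ ^ 2 := by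
      rw [hK]; ring
    have h4 : ρ ^ 2 * K < ‖G z - G ξ‖ ^ 2 * (2 * H) ^ 2 * K := by gcongr
    nlinarith [sq_pos_of_pos hρ]
  set S : Set ℂ := ball ξ s ∩ {z | 0 < ((z - ξ) * (starRingEnd ℂ) ξ).re} with hS
  have hSo : IsOpen S := isOpen_ball.inter (isOpen_lt continuous_const (by fun_prop))
  have key := limB hd ξ ξ hξ1 ha0 has (α := -(Real.pi/2)) (β := Real.pi/2) (l := ρ / (2 * H))
    (by linarith) (by linarith) (by positivity) hSo.measurableSet (S := S) inter_subset_left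
    (by
      intro r hr θ hθ
      have hr0 : 0 < r := ha0.trans hr.1
      refine ⟨?_, ?_⟩
      · rw [mem_ball, pp_dist ξ ξ hξ1 hr0.le]; exact hr.2
      · have e : (pp ξ ξ r θ - ξ) * (starRingEnd ℂ) ξ = (r : ℂ) * cexp (θ * I) := by
          have : ξ * (starRingEnd ℂ) ξ = 1 := by
            rw [Complex.mul_conj, Complex.normSq_eq_norm_sq, hξ1]; simp
          unfold pp
          linear_combination (r * cexp (θ * I)) * this
        rw [mem_setOf_eq, e, Complex.re_ofReal_mul, Complex.exp_ofReal_mul_I_re]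
        exact mul_pos hr0 (Real.cos_pos_of_mem_Ioo hθ))
    (by
      intro θ hθ
      have h1 := far _ (pp_dist ξ ξ hξ1 hs0.le θ)
      have h2 := near _ (pp_dist ξ ξ hξ1 ha0.le θ)
      have h3 : ‖G (pp ξ ξ s θ) - G ξ‖ ≤ ‖G (pp ξ ξ s θ) - G (pp ξ ξ a θ)‖ + ‖G (pp ξ ξ a θ) - G ξ‖ :=
        norm_sub_le_norm_sub_add_norm_sub _ _ _
      have h4 : ρ / H = ρ / (2 * H) + ρ / (2 * H) := by field_simp; ring
      linarith)
  have hSsub : G '' S ⊆ ball (G ξ) ρ := (image_mono inter_subset_left).trans hsub'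
  refine ⟨G '' S, (G.isOpenMap S hSo).measurableSet, hSsub, ?_, ?_⟩
  · rw [disjoint_image_iff G.injective, disjoint_left]
    rintro z ⟨_, hz⟩ hz1
    rw [mem_ball_zero_iff] at hz1
    rw [mem_setOf_eq] at hz
    have e : ‖z‖ ^ 2 = ‖ξ‖ ^ 2 + 2 * ((z - ξ) * (starRingEnd ℂ) ξ).re + ‖z - ξ‖ ^ 2 := by
      rw [← Complex.normSq_eq_norm_sq, ← Complex.normSq_eq_norm_sq, ← Complex.normSq_eq_norm_sq]
      simp [Complex.normSq_apply]; ring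
    rw [hξ1] at e
    have : ‖z‖ ^ 2 < 1 := by
      have := norm_nonneg z
      nlinarith
    nlinarith [sq_nonneg ‖z - ξ‖]
  · have hfin : volume (G '' S) ≠ ⊤ := ((measure_mono hSsub).trans_lt measure_ball_lt_top).ne
    rw [← ENNReal.ofReal_toReal hfin]
    apply ENNReal.ofReal_le_ofReal
    set V := (volume (G '' S)).toReal with hV
    have hV0 : 0 ≤ V := ENNReal.toReal_nonneg
    rw [hsa] at key
    rw [div_mul_eq_mul_div, div_le_iff₀ (by positivity)]
    calc _ = (ρ / (2 * H)) ^ 2 * (Real.pi / 2 - -(Real.pi / 2)) := by field_simp; ring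
      _ ≤ _ := key
      _ ≤ _ := by nlinarith [mul_nonneg (Real.exp_pos K).le hV0]

end QC

/-- every quasidisk satisfies the (A)-condition. -/
theorem quasidisk_A_condition (f : ℂ → ℂ) (hf : IsQCOfPlane f) :
    ∃ Θ₀ ∈ Set.Ioo (0 : ℝ) 1, ∃ ρ₀ ∈ Set.Ioo (0 : ℝ) 1,
      ∀ ζ ∈ frontier (f '' Metric.ball 0 1), ∀ ρ : ℝ, 0 < ρ → ρ ≤ ρ₀ →
        volume ((f '' Metric.ball 0 1) ∩ Metric.ball ζ ρ) ≤
          ENNReal.ofReal Θ₀ * volume (Metric.ball ζ ρ) := by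
  obtain ⟨F, C, hd⟩ := QC.exists_data hf
  obtain ⟨G, hG⟩ := hf.1
  subst hG
  obtain ⟨c, hc, hS⟩ := QC.final hd
  have hpi := Real.pi_pos
  refine ⟨1 - min c (1/2), ⟨?_, ?_⟩, 1/2, ⟨by norm_num, by norm_num⟩, ?_⟩
  · have := min_le_right c (1/2); linarith
  · have : 0 < min c (1/2) := lt_min hc (by norm_num)
    linarith
  intro ζ hζ ρ hρ _
  rw [← G.image_frontier, frontier_ball _ one_ne_zero] at hζ
  obtain ⟨ξ, hξ, rfl⟩ := hζ
  obtain ⟨S, hSm, hSs, hSd, hSv⟩ := hS ξ hξ ρ hρ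
  have h1 : (G '' Metric.ball 0 1) ∩ Metric.ball (G ξ) ρ ⊆ Metric.ball (G ξ) ρ \ S := fun w hw =>
    ⟨hw.2, fun h => Set.disjoint_left.1 hSd h hw.1⟩
  have hm := min_le_left c (1/2)
  have hm2 := min_le_right c (1/2)
  refine (measure_mono h1).trans ?_
  rw [measure_diff hSs hSm.nullMeasurableSet ((measure_mono hSs).trans_lt measure_ball_lt_top).ne,
    QC.vol_ball _ hρ.le, ← ENNReal.ofReal_mul (by linarith)]
  refine (tsub_le_tsub_left hSv _).trans ?_
  rw [← ENNReal.ofReal_sub _ (by positivity)]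
  apply ENNReal.ofReal_le_ofReal
  have : min c (1/2) * (ρ ^ 2 * Real.pi) ≤ c * (ρ ^ 2 * Real.pi) := by gcongr
  linarith
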